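/- arXiv:1905.12312 — 3 statements merged into one kernel-verified Lean document; each statement's English description precedes it below -/
import Mathlib

section
/- For any partition μ, Σ_{λ⋗μ} F_λ · c(λ/μ) = 0, where the sum is over all partitions λ obtained from μ by adding one box, F_λ is the number of standard Young tableaux of shape λ, and c(λ/μ) is the content of the added box. -/
/-!
The standard tableaux of shape `μ` are the linear extensions of the poset of its cells, so
`F_μ = ∑_a F_{μ ∖ a}` over the removable boxes `a` of `μ`. Apply this to each `F_{μ ∪ b}`, `b` an
addable box: removing `b` again contributes `F_μ · ∑_b c(b)`, and the other terms are indexed by the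
pairs `(a, b)` with `a` removable from `μ` and `b ≠ a` addable to `μ ∖ a`. By induction on `|μ|`,
for fixed `a` these terms sum to minus the term that `b = a` would contribute, that is, to
`-F_μ · c(a)`. The total is `F_μ · (∑_b c(b) - ∑_a c(a))`. It vanishes because the addable and the
removable boxes have the same content sum: pairing the removable box in row `i` with the addable box
in row `i + 1`, the differences of contents telescope and cancel the content of the addable box in
row `0`.
-/

open Polynomial Finset

/-- `AddBox μ lam` means the Young diagram `lam` is obtained from `μ` by adding one box,
i.e. `μ ⋖ lam` in the Young lattice. -/
def AddBox (μ lam : YoungDiagram) : Prop := μ ≤ lam ∧ lam.card = μ.card + 1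

/-- The sum of the contents (column − row) of the boxes of `lam` not in `μ`;
when `lam/μ` is a single box this is the content of that box. -/
def skewContent (lam μ : YoungDiagram) : ℤ :=
  ∑ c ∈ lam.cells \ μ.cells, ((c.2 : ℤ) - (c.1 : ℤ))

/-- `F μ`: the number of standard Young tableaux of shape `μ`, i.e. bijective fillings of the
cells of `μ` by `0, …, |μ|-1` that increase along rows and columns. -/
noncomputable def SYTCount (μ : YoungDiagram) : ℕ :=
  Nat.card {T : μ.cells ≃ Fin μ.card //
    ∀ a b : μ.cells, (a : ℕ × ℕ).1 ≤ (b : ℕ × ℕ).1 → (a : ℕ × ℕ).2 ≤ (b : ℕ × ℕ).2 →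
      (T a : ℕ) ≤ (T b : ℕ)}

/-- `lam` is obtained from `ρ` by adding a horizontal domino. -/
def AddDominoH (ρ lam : YoungDiagram) : Prop :=
  ρ ≤ lam ∧ ∃ i j : ℕ, lam.cells \ ρ.cells = {(i, j), (i, j + 1)}

/-- `lam` is obtained from `ρ` by adding a vertical domino. -/
def AddDominoV (ρ lam : YoungDiagram) : Prop :=
  ρ ≤ lam ∧ ∃ i j : ℕ, lam.cells \ ρ.cells = {(i, j), (i + 1, j)}

/-- The number of (nonempty) rows of a Young diagram. -/
def nrows (μ : YoungDiagram) : ℕ := μ.colLen 0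

/-- The degree vector of a partition: `n_i = λ_i + r - i` (here `0`-indexed). -/
def degVec (μ : YoungDiagram) (i : Fin (nrows μ)) : ℕ :=
  μ.rowLen i + (nrows μ - 1 - (i : ℕ))

section LinearExtensions

variable {α : Type*} [PartialOrder α] {n : ℕ}

/-- `p` lists the elements of `S` in an order extending the order of `α`: a linear extension of `S`,
encoded by the enumeration `Fin n → α` of `S` rather than by the labelling `S → Fin n`. Injectivity
of `p` follows from the second condition. -/
def IsLinearExtension (S : Finset α) (p : Fin n → α) : Prop :=
  Set.range p = S ∧ ∀ ⦃i j⦄, p i ≤ p j → i ≤ j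

/-- The number of linear extensions of a finite set `S`, the analogue of the number of standard
Young tableaux for an arbitrary finite poset. -/
noncomputable def numLinearExtensions (S : Finset α) : ℕ :=
  Nat.card {p : Fin #S → α // IsLinearExtension S p}

open Classical in
/-- The maximal elements of `S`: when `S` is a lower set, those whose removal from `S` leaves a
lower set. -/
noncomputable def removable (S : Finset α) : Finset α :=
  {a ∈ S | Maximal (· ∈ S) a}

theorem mem_removable {S : Finset α} {a : α} : a ∈ removable S ↔ Maximal (· ∈ S) a := by
  simpa only [removable, mem_filter, and_iff_right_iff_imp] using Maximal.prop

theorem IsLinearExtension.injective {S : Finset α} {p : Fin n → α} (hp : IsLinearExtension S p) :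
    Function.Injective p :=
  fun _ _ h ↦ le_antisymm (hp.2 h.le) (hp.2 h.ge)

/-- The enumeration of `S` given by the inverse of a monotone labelling. -/
def linearExtensionOfLabelling (S : Finset α) (T : {T : S ≃ Fin n // Monotone T}) :
    {p : Fin n → α // IsLinearExtension S p} :=
  ⟨fun i ↦ T.1.symm i, by
    rw [← Function.comp_def, T.1.symm.surjective.range_comp, Subtype.range_coe],
    fun i j h ↦ by simpa using T.2 h⟩

theorem linearExtensionOfLabelling_bijective (S : Finset α) :
    Function.Bijective (linearExtensionOfLabelling (n := n) S) := by
  refine ⟨fun T U h ↦ ?_, fun ⟨p, hp⟩ ↦ ?_⟩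
  · have h_symm : T.1.symm = U.1.symm :=
      Equiv.ext fun i ↦ Subtype.ext (congrFun (congrArg Subtype.val h) i)
    exact Subtype.ext (Equiv.symm_bijective.injective h_symm)
  · let e : Fin n ≃ S := (Equiv.ofInjective p hp.injective).trans (Equiv.setCongr hp.1)
    have h_mono : Monotone e.symm := fun x y hxy ↦ hp.2 <| by
      have h_apply (z : S) : p (e.symm z) = z := congrArg Subtype.val (e.apply_symm_apply z)
      rwa [h_apply, h_apply]
    exact ⟨⟨e.symm, h_mono⟩, rfl⟩

instance (S : Finset α) : Finite {p : Fin n → α // IsLinearExtension S p} :=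
  Finite.of_surjective _ (linearExtensionOfLabelling_bijective S).surjective

variable [DecidableEq α]

theorem isLinearExtension_snoc {S : Finset α} {p : Fin n → α} {a : α} :
    IsLinearExtension S (Fin.snoc p a : Fin (n + 1) → α) ↔
      a ∈ removable S ∧ IsLinearExtension (S.erase a) p := by
  simp only [IsLinearExtension, Fin.range_snoc, Fin.forall_fin_succ', Fin.snoc_castSucc,
    Fin.snoc_last, Fin.castSucc_le_castSucc_iff, Fin.le_last, mem_removable, coe_erase]
  constructor
  · rintro ⟨h_range, h_order⟩
    have ha (i) : ¬ a ≤ p i := fun h ↦ (Fin.castSucc_lt_last i).not_ge (h_order.2.1 i h)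
    have ha_range : a ∉ Set.range p := fun ⟨i, hi⟩ ↦ ha i hi.ge
    have h_max : Maximal (· ∈ insert a (Set.range p)) a := by
      refine ⟨Set.mem_insert a _, ?_⟩
      rintro _ (rfl | ⟨i, rfl⟩) h
      exacts [le_rfl, absurd h (ha i)]
    refine ⟨by simpa only [h_range, mem_coe] using h_max, ?_, fun i j h ↦ (h_order.1 i).1 j h⟩
    rw [← h_range, Set.insert_sdiff_self_of_notMem ha_range]
  · rintro ⟨ha, h_range, h_order⟩
    have h_mem (i) : p i ∈ (S : Set α) \ {a} := h_range ▸ Set.mem_range_self i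
    refine ⟨?_, fun i ↦ ⟨fun j h ↦ h_order h, fun _ ↦ trivial⟩, fun i h ↦ ?_, fun _ ↦ trivial⟩
    · rw [h_range, Set.insert_sdiff_singleton, Set.insert_eq_of_mem (mem_coe.2 ha.prop)]
    · exact absurd (ha.eq_of_ge (h_mem i).1 h) (h_mem i).2

theorem card_isLinearExtension_succ (S : Finset α) :
    Nat.card {p : Fin (n + 1) → α // IsLinearExtension S p} =
      ∑ a ∈ removable S, Nat.card {p : Fin n → α // IsLinearExtension (S.erase a) p} := by
  let appendMax (x : Σ a : removable S, {p : Fin n → α // IsLinearExtension (S.erase a.1) p}) :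
      {p : Fin (n + 1) → α // IsLinearExtension S p} :=
    ⟨Fin.snoc x.2.1 x.1.1, isLinearExtension_snoc.2 ⟨x.1.2, x.2.2⟩⟩
  have h_bij : Function.Bijective appendMax := by
    refine ⟨?_, fun ⟨p, hp⟩ ↦ ?_⟩
    · rintro ⟨⟨a, ha⟩, p, hp⟩ ⟨⟨b, hb⟩, q, hq⟩ h
      obtain ⟨rfl, rfl⟩ : p = q ∧ a = b :=
        (Fin.snoc_inj (α := fun _ ↦ α)).1 (congrArg Subtype.val h)
      rfl
    · rw [← Fin.snoc_init_self p, isLinearExtension_snoc] at hp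
      exact ⟨⟨⟨_, hp.1⟩, _, hp.2⟩, Subtype.ext (Fin.snoc_init_self p)⟩
  rw [← Nat.card_eq_of_bijective appendMax h_bij, Nat.card_sigma]
  exact sum_coe_sort (removable S)
    fun a ↦ Nat.card {p : Fin n → α // IsLinearExtension (S.erase a) p}

theorem numLinearExtensions_eq_sum_erase {S : Finset α} (hS : S.Nonempty) :
    numLinearExtensions S = ∑ a ∈ removable S, numLinearExtensions (S.erase a) := by
  obtain ⟨n, hn⟩ := Nat.exists_eq_succ_of_ne_zero hS.card_ne_zero
  simp only [numLinearExtensions]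
  rw [hn, card_isLinearExtension_succ]
  refine sum_congr rfl fun a ha ↦ ?_
  rw [card_erase_of_mem (mem_removable.1 ha).prop, hn, Nat.succ_sub_one]

theorem isLowerSet_erase_of_mem_removable {S : Finset α} (hS : IsLowerSet (S : Set α)) {a : α}
    (ha : a ∈ removable S) : IsLowerSet (S.erase a : Set α) := by
  rw [coe_erase]
  exact hS.erase fun b hb hab ↦ (mem_removable.1 ha).eq_of_ge hb hab

theorem mem_removable_insert_self {S : Finset α} (hS : IsLowerSet (S : Set α)) {b : α}
    (hb : b ∉ S) : b ∈ removable (insert b S) :=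
  mem_removable.2 ⟨mem_insert_self b S, fun _ hy hby ↦
    ((mem_insert.1 hy).resolve_right fun hyS ↦ hb (hS hby hyS)).le⟩

theorem mem_erase_removable_insert {S : Finset α} {a b : α} :
    a ∈ (removable (insert b S)).erase b ↔ a ∈ removable S ∧ ¬ a ≤ b := by
  rw [mem_erase, mem_removable, mem_removable]
  refine ⟨fun ⟨hab, ha⟩ ↦ ⟨⟨mem_of_mem_insert_of_ne ha.prop hab, fun y hy ↦ ?_⟩, ?_⟩,
    fun ⟨ha, hab⟩ ↦ ⟨?_, mem_insert_of_mem ha.prop, fun y hy hay ↦ ?_⟩⟩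
  · exact ha.le_of_ge (mem_insert_of_mem hy)
  · exact fun h ↦ hab (ha.eq_of_le (mem_insert_self b S) h)
  · exact fun h ↦ hab h.le
  · rcases mem_insert.1 hy with rfl | hyS
    exacts [absurd hay hab, ha.le_of_ge hyS hay]

theorem numLinearExtensions_insert {S : Finset α} (hS : IsLowerSet (S : Set α)) {b : α}
    (hb : b ∉ S) :
    numLinearExtensions (insert b S) = numLinearExtensions S +
      ∑ a ∈ (removable (insert b S)).erase b, numLinearExtensions (insert b (S.erase a)) := by
  rw [numLinearExtensions_eq_sum_erase (insert_nonempty b S),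
    ← add_sum_erase _ _ (mem_removable_insert_self hS hb), erase_insert hb]
  refine congrArg _ (sum_congr rfl fun a ha ↦ ?_)
  rw [erase_insert_of_ne (ne_of_mem_erase ha).symm]

end LinearExtensions

section Addable

variable {α : Type*} [PartialOrder α] [WellQuasiOrderedLE α]

/-- The minimal elements of the complement of `S`: when `S` is a lower set, those whose insertion
into `S` gives a lower set. They form an antichain, hence a finite set. -/
noncomputable def addable (S : Finset α) : Finset α :=
  (WellQuasiOrderedLE.finite_of_isAntichain (setOfPred_minimal_antichain (· ∉ S))).toFinset

theorem mem_addable {S : Finset α} {b : α} : b ∈ addable S ↔ Minimal (· ∉ S) b := by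
  simp [addable]

variable {S : Finset α} {a b : α}

theorem mem_addable_iff_isLowerSet_insert (hS : IsLowerSet (S : Set α)) :
    b ∈ addable S ↔ b ∉ S ∧ IsLowerSet (insert b S : Set α) := by
  rw [mem_addable]
  refine ⟨fun hb ↦ ⟨hb.prop, ?_⟩, fun ⟨hb, h_insert⟩ ↦ ⟨hb, fun y hy hyb ↦ ?_⟩⟩
  · rintro x y hyx (rfl | hx)
    · exact or_iff_not_imp_right.2 fun hy ↦ hb.eq_of_le hy hyx
    · exact Or.inr (hS hyx hx)
  · exact ((h_insert hyb (Set.mem_insert b _)).resolve_right hy).ge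

variable [DecidableEq α]

theorem mem_addable_erase_self (hS : IsLowerSet (S : Set α)) (ha : a ∈ S) :
    a ∈ addable (S.erase a) :=
  mem_addable.2 ⟨notMem_erase a S, fun _ hy hya ↦
    (not_ne_iff.1 fun hne ↦ hy (mem_erase.2 ⟨hne, hS hya ha⟩)).ge⟩

theorem mem_erase_addable_erase :
    b ∈ (addable (S.erase a)).erase a ↔ b ∈ addable S ∧ ¬ a ≤ b := by
  rw [mem_erase, mem_addable, mem_addable]
  refine ⟨fun ⟨hba, hb⟩ ↦ ⟨⟨fun hbS ↦ hb.prop (mem_erase.2 ⟨hba, hbS⟩), fun y hy ↦ ?_⟩, ?_⟩,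
    fun ⟨hb, hab⟩ ↦ ⟨?_, fun hbS ↦ hb.prop (mem_of_mem_erase hbS), fun y hy hyb ↦ ?_⟩⟩
  · exact hb.le_of_le fun hyS ↦ hy (mem_of_mem_erase hyS)
  · exact fun hab ↦ hba (hb.eq_of_le (notMem_erase a S) hab).symm
  · exact fun hba ↦ hab hba.ge
  · have hya : y ≠ a := fun hya ↦ hab (hya ▸ hyb)
    exact hb.le_of_le (fun hyS ↦ hy (mem_erase.2 ⟨hya, hyS⟩)) hyb

theorem mem_addable_and_mem_removable_comm :
    b ∈ addable S ∧ a ∈ (removable (insert b S)).erase b ↔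
      b ∈ (addable (S.erase a)).erase a ∧ a ∈ removable S := by
  rw [mem_erase_removable_insert, mem_erase_addable_erase, and_right_comm, and_assoc]

theorem sum_numLinearExtensions_insert_smul_eq_zero {M : Type*} [AddCommGroup M] {w : α → M}
    (hw : ∀ S : Finset α, IsLowerSet (S : Set α) → ∑ b ∈ addable S, w b = ∑ a ∈ removable S, w a)
    (hS : IsLowerSet (S : Set α)) :
    ∑ b ∈ addable S, numLinearExtensions (insert b S) • w b = 0 := by
  induction S using Finset.strongInduction with
  | H S ih =>
  have h_erase (a) (ha : a ∈ removable S) :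
      ∑ b ∈ (addable (S.erase a)).erase a, numLinearExtensions (insert b (S.erase a)) • w b =
        -(numLinearExtensions S • w a) := by
    have haS := (mem_removable.1 ha).prop
    rw [eq_neg_iff_add_eq_zero,
      ← ih _ (erase_ssubset haS) (isLowerSet_erase_of_mem_removable hS ha),
      ← sum_erase_add _ _ (mem_addable_erase_self hS haS), insert_erase haS]
  calc ∑ b ∈ addable S, numLinearExtensions (insert b S) • w b
    _ = ∑ b ∈ addable S, (numLinearExtensions S • w b +
          ∑ a ∈ (removable (insert b S)).erase b,
            numLinearExtensions (insert b (S.erase a)) • w b) :=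
      sum_congr rfl fun b hb ↦ by
        rw [numLinearExtensions_insert hS (mem_addable.1 hb).prop, add_smul, sum_smul]
    _ = numLinearExtensions S • ∑ b ∈ addable S, w b +
          ∑ a ∈ removable S, ∑ b ∈ (addable (S.erase a)).erase a,
            numLinearExtensions (insert b (S.erase a)) • w b := by
      rw [sum_add_distrib, smul_sum, sum_comm' fun _ _ ↦ mem_addable_and_mem_removable_comm]
    _ = numLinearExtensions S • ∑ a ∈ removable S, w a +
          ∑ a ∈ removable S, -(numLinearExtensions S • w a) := by
      rw [hw S hS, sum_congr rfl h_erase]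
    _ = 0 := by rw [sum_neg_distrib, smul_sum, add_neg_cancel]

end Addable

section YoungDiagrams

/-- The content `j - i` of the cell in row `i` and column `j`. -/
def boxContent (c : ℕ × ℕ) : ℤ := (c.2 : ℤ) - (c.1 : ℤ)

/-- The rows of `μ` strictly longer than the next one. -/
def descents (μ : YoungDiagram) : Finset ℕ :=
  {i ∈ range (nrows μ) | μ.rowLen (i + 1) < μ.rowLen i}

variable {μ lam : YoungDiagram} {i : ℕ}

theorem addBox_iff :
    AddBox μ lam ↔ ∃ b ∈ addable μ.cells, insert b μ.cells = lam.cells := by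
  rw [AddBox, ← YoungDiagram.cells_subset_iff, eq_comm (a := lam.card), ← exists_eq_insert_iff]
  refine exists_congr fun b ↦ and_congr_left fun h ↦ ?_
  rw [mem_addable_iff_isLowerSet_insert μ.isLowerSet, ← coe_insert, h, and_iff_left lam.isLowerSet]

theorem rowLen_eq_zero_iff : μ.rowLen i = 0 ↔ nrows μ ≤ i := by
  rw [← not_iff_not, ← Ne, ← pos_iff_ne_zero, not_le, nrows, ← YoungDiagram.mem_iff_lt_rowLen,
    YoungDiagram.mem_iff_lt_colLen]

theorem mem_descents : i ∈ descents μ ↔ μ.rowLen (i + 1) < μ.rowLen i := by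
  rw [descents, mem_filter, and_iff_right_iff_imp, mem_range]
  exact fun h ↦ not_le.1 fun hi ↦ (Nat.zero_le _).not_gt (rowLen_eq_zero_iff.2 hi ▸ h)

variable (μ)

theorem removable_cells :
    removable μ.cells = (descents μ).image fun i ↦ (i, μ.rowLen i - 1) := by
  ext ⟨i, j⟩
  simp only [mem_removable, mem_image, mem_descents, Prod.mk.injEq]
  constructor
  · intro h
    have h_mem : j < μ.rowLen i := YoungDiagram.mem_iff_lt_rowLen.1 h.prop
    have h_right : ¬ j + 1 < μ.rowLen i := fun hj ↦ j.lt_irrefl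
      (h.le_of_ge (y := (i, j + 1)) (YoungDiagram.mem_iff_lt_rowLen.2 hj) ⟨le_rfl, j.le_succ⟩).2
    have h_down : ¬ j < μ.rowLen (i + 1) := fun hj ↦ i.lt_irrefl
      (h.le_of_ge (y := (i + 1, j)) (YoungDiagram.mem_iff_lt_rowLen.2 hj) ⟨i.le_succ, le_rfl⟩).1
    exact ⟨i, by lia, rfl, by lia⟩
  · rintro ⟨i, hi, rfl, rfl⟩
    refine ⟨YoungDiagram.mem_iff_lt_rowLen.2 (by lia), ?_⟩
    rintro ⟨k, l⟩ hkl ⟨hik, hjl⟩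
    have hl : l < μ.rowLen k := YoungDiagram.mem_iff_lt_rowLen.1 hkl
    have hki : ¬ i + 1 ≤ k := fun hik' ↦ by
      have := μ.rowLen_anti _ _ hik'
      lia
    obtain rfl : i = k := by lia
    exact ⟨le_rfl, Nat.le_sub_one_of_lt hl⟩

theorem addable_cells :
    addable μ.cells =
      insert (0, μ.rowLen 0) ((descents μ).image fun i ↦ (i + 1, μ.rowLen (i + 1))) := by
  ext ⟨i, j⟩
  have h_mem (c : ℕ × ℕ) : c ∉ μ.cells ↔ μ.rowLen c.1 ≤ c.2 := by
    rw [YoungDiagram.mem_cells, YoungDiagram.mem_iff_lt_rowLen, not_lt]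
  simp only [mem_addable, h_mem, mem_insert, mem_image, mem_descents, Prod.mk.injEq]
  constructor
  · intro h
    have h_left : j = μ.rowLen i :=
      (h.le_of_le (y := (i, μ.rowLen i)) le_rfl ⟨le_rfl, h.prop⟩).2.antisymm h.prop
    rcases i with - | i
    · exact Or.inl ⟨rfl, h_left⟩
    · have h_up : j < μ.rowLen i := by
        by_contra! h_up
        exact i.lt_irrefl (h.le_of_le (y := (i, j)) h_up ⟨i.le_succ, le_rfl⟩).1
      exact Or.inr ⟨i, h_left ▸ h_up, rfl, h_left.symm⟩
  · rintro (⟨rfl, rfl⟩ | ⟨i, hi, rfl, rfl⟩)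
    · refine ⟨le_rfl, fun ⟨k, l⟩ hkl ⟨hk, _⟩ ↦ ?_⟩
      obtain rfl := Nat.le_zero.1 hk
      exact ⟨le_rfl, hkl⟩
    · refine ⟨le_rfl, fun ⟨k, l⟩ hkl ⟨hk, hl⟩ ↦ ?_⟩
      simp only at hkl hk hl
      have hik : ¬ k ≤ i := fun hki ↦ by
        have := μ.rowLen_anti _ _ hki
        lia
      obtain rfl : k = i + 1 := by lia
      exact ⟨le_rfl, hkl⟩

theorem sum_descents_rowLen_sub :
    ∑ i ∈ descents μ, ((μ.rowLen (i + 1) : ℤ) - μ.rowLen i) = -μ.rowLen 0 := by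
  have h_zero (i) (hi : ¬ μ.rowLen (i + 1) < μ.rowLen i) :
      (μ.rowLen (i + 1) : ℤ) - μ.rowLen i = 0 := by
    have := μ.rowLen_anti i (i + 1) i.le_succ
    lia
  rw [descents, sum_filter_of_ne fun i _ ↦ not_imp_comm.1 (h_zero i),
    sum_range_sub (fun i ↦ (μ.rowLen i : ℤ)), rowLen_eq_zero_iff.2 le_rfl, Nat.cast_zero, zero_sub]

theorem sum_boxContent_addable_cells :
    ∑ b ∈ addable μ.cells, boxContent b = ∑ a ∈ removable μ.cells, boxContent a := by
  have h_diff (i) (hi : i ∈ descents μ) :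
      boxContent (i + 1, μ.rowLen (i + 1)) - boxContent (i, μ.rowLen i - 1) =
        (μ.rowLen (i + 1) : ℤ) - μ.rowLen i := by
    have := mem_descents.1 hi
    simp only [boxContent]
    lia
  rw [addable_cells, removable_cells, sum_insert (by simp), sum_image (by simp),
    sum_image (by simp), ← sub_eq_zero, add_sub_assoc, ← sum_sub_distrib, sum_congr rfl h_diff,
    sum_descents_rowLen_sub]
  simp [boxContent]

theorem SYTCount_eq_numLinearExtensions : SYTCount μ = numLinearExtensions μ.cells := by
  rw [numLinearExtensions, ← Nat.card_eq_of_bijective _ (linearExtensionOfLabelling_bijective _)]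
  exact Nat.card_congr (Equiv.subtypeEquivRight fun T ↦
    ⟨fun h a b hab ↦ h a b hab.1 hab.2, fun h a b h₁ h₂ ↦ h ⟨h₁, h₂⟩⟩)

theorem finsum_addBox {M : Type*} [AddCommMonoid M] (g : Finset (ℕ × ℕ) → M) :
    ∑ᶠ lam ∈ {lam | AddBox μ lam}, g lam.cells = ∑ b ∈ addable μ.cells, g (insert b μ.cells) := by
  have h_cells : Function.Injective YoungDiagram.cells := fun _ _ ↦ YoungDiagram.ext
  have h_insert : Set.InjOn (insert · μ.cells) (addable μ.cells) := fun b hb _ _ h ↦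
    (insert_inj (mem_addable.1 hb).prop).1 h
  have h_image : YoungDiagram.cells '' {lam | AddBox μ lam} =
      (insert · μ.cells) '' (addable μ.cells) := by
    ext T
    constructor
    · rintro ⟨lam, h_add, rfl⟩
      exact addBox_iff.1 h_add
    · rintro ⟨b, hb, rfl⟩
      have h_lower := ((mem_addable_iff_isLowerSet_insert μ.isLowerSet).1 hb).2
      rw [← coe_insert] at h_lower
      exact ⟨⟨insert b μ.cells, h_lower⟩, addBox_iff.2 ⟨b, hb, rfl⟩, rfl⟩
  rw [← finsum_mem_image h_cells.injOn, h_image, finsum_mem_image h_insert, finsum_mem_coe_finset]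

end YoungDiagrams

theorem stmt5 (μ : YoungDiagram) :
    ∑ᶠ lam ∈ {lam : YoungDiagram | AddBox μ lam}, (SYTCount lam : ℤ) * skewContent lam μ
      = 0 := by
  calc ∑ᶠ lam ∈ {lam : YoungDiagram | AddBox μ lam}, (SYTCount lam : ℤ) * skewContent lam μ
    _ = ∑ b ∈ addable μ.cells, (numLinearExtensions (insert b μ.cells) : ℤ) *
          ∑ c ∈ insert b μ.cells \ μ.cells, boxContent c := by
      simp only [SYTCount_eq_numLinearExtensions]
      exact finsum_addBox μ fun T ↦ (numLinearExtensions T : ℤ) * ∑ c ∈ T \ μ.cells, boxContent c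
    _ = ∑ b ∈ addable μ.cells, numLinearExtensions (insert b μ.cells) • boxContent b :=
      sum_congr rfl fun b hb ↦ by
        rw [insert_sdiff_cancel (mem_addable.1 hb).prop, sum_singleton, nsmul_eq_mul]
    _ = 0 := sum_numLinearExtensions_insert_smul_eq_zero
      (fun S hS ↦ sum_boxContent_addable_cells ⟨S, hS⟩) μ.isLowerSet
end

section
/- For any partition ρ, Σ_{λ ∈ R₂⁺(ρ)} (−1)^{ht(λ/ρ)} F_λ = 0, where the sum is over all partitions λ obtained from ρ by adding a border strip of size 2 (a domino), ht(λ/ρ) is 0 if the domino is horizontal and 1 if vertical, and F_λ is the number of standard Young tableaux of shape λ. -/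
open Polynomial Finset

/-!
Write `E ρ` for the signed sum over all ways of adding a domino to `ρ`. Expand each number of
tableaux by deleting the cell with the largest label. Removing a box after adding a domino and
adding a domino after removing a box give the same signed count of paths between any two diagrams
`ρ` and `κ`: if `κ` is not `ρ` plus a box, both sides reduce to the parallelogram formed by `ρ`,
`κ`, `ρ ⊔ κ` and `ρ ⊓ κ`; if `κ` is `ρ` plus a box `c`, then either the right neighbour of `c` can
be added to `κ` or its upper neighbour can be removed from `ρ`, but not both, and likewise for the
transposed diagrams, so the horizontal and vertical contributions balance. Hence `E ρ` is the sum
of `E σ` over the diagrams `σ` obtained from `ρ` by removing one box, and it vanishes by induction.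
-/

section Labelings

variable {α β : Type*} {n : ℕ}

/-- Deleting the element labelled by `n` from a labeling by `0, …, n`. -/
def eraseLastEquiv [DecidableEq α] (n : ℕ) (m : α) :
    {T : α ≃ Fin (n + 1) // T m = Fin.last n} ≃ ({x // x ≠ m} ≃ Fin n) :=
  (((Equiv.optionSubtypeNe m).symm.equivCongr (.refl _)).subtypeEquiv fun _ => by simp).trans <|
    (Equiv.optionSubtype (Fin.last n)).trans <|
      (Equiv.refl _).equivCongr (finSuccAboveEquiv (Fin.last n)).symm

lemma castSucc_eraseLastEquiv_apply [DecidableEq α] {m : α}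
    (T : {T : α ≃ Fin (n + 1) // T m = Fin.last n}) (x : {x // x ≠ m}) :
    (eraseLastEquiv n m T x).castSucc = T.1 x := by
  rw [← Fin.succAbove_last_apply]
  exact congrArg Subtype.val ((finSuccAboveEquiv (Fin.last n)).apply_symm_apply _)

variable [PartialOrder α] [PartialOrder β]

/-- Increasing labelings of the elements of `α` by `0, …, n - 1`, each label being used once. For
the cells of a Young diagram with `n` cells these are its standard Young tableaux. -/
abbrev MonotoneLabeling (α : Type*) [PartialOrder α] (n : ℕ) : Type _ :=
  {T : α ≃ Fin n // Monotone T}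

lemma card_monotoneLabeling_congr (e : α ≃o β) :
    Nat.card (MonotoneLabeling α n) = Nat.card (MonotoneLabeling β n) :=
  Nat.card_congr <| (e.toEquiv.equivCongr (.refl _)).subtypeEquiv fun T =>
    ⟨fun hT => hT.comp e.symm.monotone, fun hT x y hxy => by simpa using hT (e.monotone hxy)⟩

lemma isMax_of_apply_eq_last {T : α ≃ Fin (n + 1)} (hT : Monotone T) {m : α}
    (hm : T m = Fin.last n) : IsMax m :=
  fun _ hx => (T.injective (hm.trans (le_antisymm (hm ▸ hT hx) (Fin.le_last _)))).ge

lemma monotone_eraseLastEquiv_iff [DecidableEq α] {m : α} (hm : IsMax m)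
    (T : {T : α ≃ Fin (n + 1) // T m = Fin.last n}) :
    Monotone (eraseLastEquiv n m T) ↔ Monotone T.1 := by
  have hle (x y : {x // x ≠ m}) :
      eraseLastEquiv n m T x ≤ eraseLastEquiv n m T y ↔ T.1 x ≤ T.1 y := by
    rw [← Fin.castSucc_le_castSucc_iff, castSucc_eraseLastEquiv_apply,
      castSucc_eraseLastEquiv_apply]
  refine ⟨fun hT x y hxy => ?_, fun hT x y hxy => (hle x y).2 (hT hxy)⟩
  by_cases hy : y = m
  · rw [hy, T.2]
    exact Fin.le_last _
  · have hx : x ≠ m := fun h => hy (hm.eq_of_ge (h ▸ hxy))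
    exact (hle ⟨x, hx⟩ ⟨y, hy⟩).1 (hT hxy)

lemma card_monotoneLabeling_apply_eq_last {m : α} (hm : IsMax m) :
    Nat.card {T : MonotoneLabeling α (n + 1) // T.1 m = Fin.last n}
      = Nat.card (MonotoneLabeling {x // x ≠ m} n) := by
  classical
  exact Nat.card_congr <| (Equiv.subtypeSubtypeEquivSubtypeInter _ _).trans <|
    (Equiv.subtypeEquivRight fun _ => and_comm).trans <|
      (Equiv.subtypeSubtypeEquivSubtypeInter _ _).symm.trans <|
        (eraseLastEquiv n m).subtypeEquiv fun T => (monotone_eraseLastEquiv_iff hm T).symm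

open scoped Classical in
theorem card_monotoneLabeling_succ [Fintype α] :
    Nat.card (MonotoneLabeling α (n + 1))
      = ∑ m : α with IsMax m, Nat.card (MonotoneLabeling {x // x ≠ m} n) := by
  have hfiber : Nat.card (MonotoneLabeling α (n + 1))
      = ∑ m : α, Nat.card {T : MonotoneLabeling α (n + 1) // T.1.symm (Fin.last n) = m} := by
    rw [← Nat.card_sigma]
    exact Nat.card_congr (Equiv.sigmaFiberEquiv _).symm
  simp only [Equiv.symm_apply_eq, eq_comm (a := Fin.last n)] at hfiber
  rw [hfiber, sum_filter]
  refine sum_congr rfl fun m _ => ?_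
  split_ifs with hm
  · exact card_monotoneLabeling_apply_eq_last hm
  · have : IsEmpty {T : MonotoneLabeling α (n + 1) // T.1 m = Fin.last n} :=
      ⟨fun T => hm (isMax_of_apply_eq_last T.1.2 T.2)⟩
    exact Nat.card_of_isEmpty

end Labelings

section YoungLattice

variable {κ lam μ ρ σ : YoungDiagram} {c : ℕ × ℕ} {n : ℕ}

lemma lt_card_of_mem {i j : ℕ} (h : (i, j) ∈ μ) : i < μ.card ∧ j < μ.card := by
  constructor
  · exact (YoungDiagram.mem_iff_lt_colLen.1 h).trans_le
      (μ.colLen_eq_card.trans_le (card_filter_le _ _))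
  · exact (YoungDiagram.mem_iff_lt_rowLen.1 h).trans_le
      (μ.rowLen_eq_card.trans_le (card_filter_le _ _))

lemma finite_setOf_card_eq (n : ℕ) : {μ : YoungDiagram | μ.card = n}.Finite := by
  refine Set.Finite.of_injOn (f := YoungDiagram.cells)
    (t := ((range n ×ˢ range n).powerset : Set (Finset (ℕ × ℕ)))) ?_
    (fun _ _ _ _ => YoungDiagram.ext) (finite_toSet _)
  rintro μ rfl
  simp only [coe_powerset, Set.mem_preimage, Set.mem_powerset_iff, coe_subset]
  rintro ⟨i, j⟩ hc
  exact mem_product.2 ((lt_card_of_mem hc).imp mem_range.2 mem_range.2)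

/-- The Young diagrams with `n` cells, i.e. the partitions of `n`. -/
noncomputable def diagramsOfCard (n : ℕ) : Finset YoungDiagram := (finite_setOf_card_eq n).toFinset

@[simp]
lemma mem_diagramsOfCard : μ ∈ diagramsOfCard n ↔ μ.card = n := by
  simp [diagramsOfCard]

open scoped Classical in
/-- The Young diagrams obtained from `μ` by adding one box. -/
noncomputable def upperCovers (μ : YoungDiagram) : Finset YoungDiagram :=
  {lam ∈ diagramsOfCard (μ.card + 1) | AddBox μ lam}

open scoped Classical in
/-- The Young diagrams obtained from `μ` by removing one box. -/
noncomputable def lowerCovers (μ : YoungDiagram) : Finset YoungDiagram :=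
  {κ ∈ diagramsOfCard (μ.card - 1) | AddBox κ μ}

@[simp]
lemma mem_upperCovers : lam ∈ upperCovers μ ↔ AddBox μ lam := by
  simp only [upperCovers, mem_filter, mem_diagramsOfCard, and_iff_right_iff_imp]
  exact And.right

@[simp]
lemma mem_lowerCovers : κ ∈ lowerCovers μ ↔ AddBox κ μ := by
  simp only [lowerCovers, mem_filter, mem_diagramsOfCard, and_iff_right_iff_imp]
  exact fun h => by rw [h.2, Nat.add_sub_cancel]

lemma addBox_iff_exists_insert : AddBox μ lam ↔ ∃ c ∉ μ.cells, insert c μ.cells = lam.cells := by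
  rw [exists_eq_insert_iff, AddBox, YoungDiagram.cells_subset_iff, eq_comm]

lemma addBox_of_cells_eq_erase (hc : c ∈ μ.cells) (h : κ.cells = μ.cells.erase c) : AddBox κ μ :=
  addBox_iff_exists_insert.2 ⟨c, by simp [h], by rw [h, insert_erase hc]⟩

lemma exists_cells_eq_insert_iff :
    (∃ lam : YoungDiagram, lam.cells = insert c μ.cells) ↔ ∀ x < c, x ∈ μ := by
  constructor
  · rintro ⟨lam, h⟩ x hx
    have hxlam : x ∈ lam.cells := lam.isLowerSet hx.le (by simp [h])
    rw [h] at hxlam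
    exact mem_of_mem_insert_of_ne hxlam hx.ne
  · intro h
    refine ⟨⟨insert c μ.cells, fun x y hyx hx => ?_⟩, rfl⟩
    rw [coe_insert] at hx ⊢
    rcases hx with rfl | hx
    · exact hyx.eq_or_lt.imp_right (h y)
    · exact Or.inr (μ.isLowerSet hyx hx)

lemma exists_cells_eq_erase_iff :
    (∃ κ : YoungDiagram, κ.cells = μ.cells.erase c) ↔ ∀ x ∈ μ, ¬ c < x := by
  constructor
  · rintro ⟨κ, h⟩ x hx hcx
    have hc : c ∈ κ.cells := κ.isLowerSet hcx.le
      (show x ∈ κ.cells from h ▸ mem_erase.2 ⟨hcx.ne', hx⟩)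
    simp [h] at hc
  · intro h
    refine ⟨⟨μ.cells.erase c, fun x y hyx hx => ?_⟩, rfl⟩
    rw [coe_erase] at hx ⊢
    refine ⟨μ.isLowerSet hyx hx.1, ?_⟩
    rintro rfl
    exact h x hx.1 (hyx.lt_of_ne' hx.2)

/-- The cells of `μ` other than `m`, as the cells of the diagram obtained by removing `m`. -/
def cellsEraseOrderIso {m : μ.cells} (h : κ.cells = μ.cells.erase m) :
    {x : μ.cells // x ≠ m} ≃o κ.cells where
  toEquiv := (Equiv.subtypeSubtypeEquivSubtypeExists _ _).trans <|
    Equiv.subtypeEquivRight fun x => by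
      simp [h, Subtype.ext_iff, and_comm]
  map_rel_iff' := Iff.rfl

lemma SYTCount_eq_card_monotoneLabeling (μ : YoungDiagram) :
    SYTCount μ = Nat.card (MonotoneLabeling μ.cells μ.card) :=
  Nat.card_congr <| Equiv.subtypeEquivRight fun _ =>
    forall₂_congr fun _ _ => and_imp.symm

lemma isMax_cell_iff {m : μ.cells} :
    IsMax m ↔ ∃ κ : YoungDiagram, κ.cells = μ.cells.erase m := by
  simp [exists_cells_eq_erase_iff, isMax_iff_forall_not_lt, Subtype.forall, ← Subtype.coe_lt_coe]

lemma card_monotoneLabeling_ne {m : μ.cells} (h : κ.cells = μ.cells.erase m) (hκ : κ.card = n) :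
    Nat.card (MonotoneLabeling {x // x ≠ m} n) = SYTCount κ := by
  rw [SYTCount_eq_card_monotoneLabeling, hκ]
  exact card_monotoneLabeling_congr (cellsEraseOrderIso h)

theorem SYTCount_eq_sum_lowerCovers (hμ : μ ≠ ⊥) :
    SYTCount μ = ∑ κ ∈ lowerCovers μ, SYTCount κ := by
  classical
  have hcard : μ.card ≠ 0 := fun h => hμ (YoungDiagram.ext (card_eq_zero.1 h))
  obtain ⟨n, hn⟩ := Nat.exists_eq_succ_of_ne_zero hcard
  choose! del hdel using fun m : μ.cells => (isMax_cell_iff (m := m)).1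
  have hadd (m : μ.cells) (hm : IsMax m) : AddBox (del m) μ :=
    addBox_of_cells_eq_erase m.2 (hdel m hm)
  rw [SYTCount_eq_card_monotoneLabeling, hn, card_monotoneLabeling_succ]
  refine sum_bij (fun m _ => del m) ?_ ?_ ?_ ?_
  · simpa using hadd
  · intro m hm m' hm' h
    rw [mem_filter_univ] at hm hm'
    have herase : μ.cells.erase m = μ.cells.erase m' := by rw [← hdel m hm, ← hdel m' hm', h]
    exact Subtype.ext (erase_injOn _ m.2 m'.2 herase)
  · intro κ hκ
    obtain ⟨c, hc, h⟩ := addBox_iff_exists_insert.1 (mem_lowerCovers.1 hκ)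
    have hκ' : κ.cells = μ.cells.erase c := by rw [← h, erase_insert hc]
    have hm : IsMax (⟨c, h ▸ mem_insert_self _ _⟩ : μ.cells) := isMax_cell_iff.2 ⟨κ, hκ'⟩
    exact ⟨_, by simpa using hm, YoungDiagram.ext ((hdel _ hm).trans hκ'.symm)⟩
  · intro m hm
    rw [mem_filter_univ] at hm
    exact card_monotoneLabeling_ne (hdel m hm) (by have := (hadd m hm).2; omega)

lemma card_sup_add_card_inf (μ ν : YoungDiagram) :
    (μ ⊔ ν).card + (μ ⊓ ν).card = μ.card + ν.card :=
  card_union_add_card_inter _ _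

lemma AddBox.covBy (h : AddBox μ lam) : μ ⋖ lam := by
  have hlt : StrictMono YoungDiagram.card := fun _ _ h =>
    card_lt_card (YoungDiagram.cells_ssubset_iff.2 h)
  refine ⟨h.1.lt_of_ne ?_, fun ν hμν hν => ?_⟩
  · rintro rfl
    exact absurd h.2 (by omega)
  · have := hlt hμν
    have := hlt hν
    have := h.2
    omega

lemma addBox_inf_iff_addBox_sup : AddBox (ρ ⊓ κ) ρ ↔ AddBox κ (ρ ⊔ κ) := by
  have := card_sup_add_card_inf ρ κ
  simp only [AddBox, inf_le_left, le_sup_right, true_and]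
  omega

open scoped Classical in
/-- The sign `(-1) ^ ht(lam/ρ)` of an added domino `lam/ρ`, and `0` if `lam/ρ` is no domino. -/
noncomputable def dominoSign (ρ lam : YoungDiagram) : ℤ :=
  (if AddDominoH ρ lam then 1 else 0) - (if AddDominoV ρ lam then 1 else 0)

lemma dominoSign_inf_sup (ρ κ : YoungDiagram) : dominoSign (ρ ⊓ κ) κ = dominoSign ρ (ρ ⊔ κ) := by
  have hcells : κ.cells \ (ρ ⊓ κ).cells = (ρ ⊔ κ).cells \ ρ.cells := by
    rw [YoungDiagram.cells_inf, YoungDiagram.cells_sup, sdiff_inter_self_right, union_sdiff_left]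
  have hH : AddDominoH (ρ ⊓ κ) κ ↔ AddDominoH ρ (ρ ⊔ κ) := by
    simp only [AddDominoH, hcells, inf_le_right, le_sup_left]
  have hV : AddDominoV (ρ ⊓ κ) κ ↔ AddDominoV ρ (ρ ⊔ κ) := by
    simp only [AddDominoV, hcells, inf_le_right, le_sup_left]
  classical
  exact congrArg₂ (· - ·) (if_congr hH rfl rfl) (if_congr hV rfl rfl)

lemma card_eq_of_cells_sdiff_eq_pair {a b : ℕ × ℕ} (hle : ρ ≤ lam) (hab : a ≠ b)
    (h : lam.cells \ ρ.cells = {a, b}) : lam.card = ρ.card + 2 := by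
  rw [← card_pair hab, ← h, add_comm]
  exact (card_sdiff_add_card_eq_card hle).symm

lemma AddDominoH.card_eq (h : AddDominoH ρ lam) : lam.card = ρ.card + 2 := by
  obtain ⟨hle, i, j, h⟩ := h
  exact card_eq_of_cells_sdiff_eq_pair hle (by simp) h

lemma AddDominoV.card_eq (h : AddDominoV ρ lam) : lam.card = ρ.card + 2 := by
  obtain ⟨hle, i, j, h⟩ := h
  exact card_eq_of_cells_sdiff_eq_pair hle (by simp) h

lemma addDomino_of_dominoSign_ne_zero (h : dominoSign ρ lam ≠ 0) :
    AddDominoH ρ lam ∨ AddDominoV ρ lam := by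
  contrapose! h
  simp [dominoSign, h]

lemma le_of_dominoSign_ne_zero (h : dominoSign ρ lam ≠ 0) : ρ ≤ lam :=
  (addDomino_of_dominoSign_ne_zero h).elim And.left And.left

lemma card_eq_of_dominoSign_ne_zero (h : dominoSign ρ lam ≠ 0) : lam.card = ρ.card + 2 :=
  (addDomino_of_dominoSign_ne_zero h).elim AddDominoH.card_eq AddDominoV.card_eq

lemma eq_sup_of_addBox (hκρ : ¬ AddBox ρ κ) (hκ : AddBox κ lam) (hρ : dominoSign ρ lam ≠ 0) :
    ρ ⊔ κ = lam := by
  have hcard := card_eq_of_dominoSign_ne_zero hρ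
  have hle : ¬ ρ ≤ κ := fun h => hκρ ⟨h, Nat.succ_injective (hκ.2.symm.trans hcard)⟩
  exact (hκ.covBy.eq_or_eq le_sup_right (sup_le (le_of_dominoSign_ne_zero hρ) hκ.1)).resolve_left
    fun h => hle (sup_eq_right.1 h)

lemma eq_inf_of_addBox (hκρ : ¬ AddBox ρ κ) (hρ : AddBox σ ρ) (hκ : dominoSign σ κ ≠ 0) :
    ρ ⊓ κ = σ := by
  have hcard := card_eq_of_dominoSign_ne_zero hκ
  have hle : ¬ ρ ≤ κ := fun h => hκρ ⟨h, hcard.trans (congrArg Nat.succ hρ.2.symm)⟩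
  exact (hρ.covBy.eq_or_eq (le_inf hρ.1 (le_of_dominoSign_ne_zero hκ)) inf_le_left).resolve_right
    fun h => hle (inf_eq_left.1 h)

lemma sum_upperCovers_dominoSign_of_not_addBox (h : ¬ AddBox ρ κ) :
    ∑ lam ∈ upperCovers κ, dominoSign ρ lam = ∑ σ ∈ lowerCovers ρ, dominoSign σ κ := by
  refine sum_bij_ne_zero (fun _ _ _ => ρ ⊓ κ) ?_ ?_ ?_ ?_
  · intro lam hlam hne
    obtain rfl := eq_sup_of_addBox h (mem_upperCovers.1 hlam) hne
    exact mem_lowerCovers.2 (addBox_inf_iff_addBox_sup.2 (mem_upperCovers.1 hlam))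
  · intro lam hlam hne lam' hlam' hne' _
    rw [← eq_sup_of_addBox h (mem_upperCovers.1 hlam) hne,
      ← eq_sup_of_addBox h (mem_upperCovers.1 hlam') hne']
  · intro σ hσ hne
    obtain rfl := eq_inf_of_addBox h (mem_lowerCovers.1 hσ) hne
    exact ⟨ρ ⊔ κ, mem_upperCovers.2 (addBox_inf_iff_addBox_sup.1 (mem_lowerCovers.1 hσ)),
      by rwa [← dominoSign_inf_sup], rfl⟩
  · intro lam hlam hne
    rw [dominoSign_inf_sup, eq_sup_of_addBox h (mem_upperCovers.1 hlam) hne]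

lemma addBox_transpose_iff : AddBox μ.transpose lam.transpose ↔ AddBox μ lam := by
  have hcard (ν : YoungDiagram) : ν.transpose.card = ν.card := card_map _
  rw [AddBox, AddBox, YoungDiagram.transpose_le_iff, hcard, hcard]

lemma addDominoH_transpose_iff : AddDominoH ρ.transpose lam.transpose ↔ AddDominoV ρ lam := by
  have hcells (i j : ℕ) : lam.transpose.cells \ ρ.transpose.cells = {(j, i), (j, i + 1)} ↔
      lam.cells \ ρ.cells = {(i, j), (i + 1, j)} := by
    rw [Finset.ext_iff, Finset.ext_iff, (Equiv.prodComm ℕ ℕ).forall_congr_left]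
    simp [Prod.ext_iff, and_comm]
  simp only [AddDominoH, AddDominoV, YoungDiagram.transpose_le_iff, ← hcells]
  rw [exists_comm]

lemma addDominoV_transpose_iff : AddDominoV ρ.transpose lam.transpose ↔ AddDominoH ρ lam := by
  rw [← addDominoH_transpose_iff, YoungDiagram.transpose_transpose,
    YoungDiagram.transpose_transpose]

section AddedBox

variable {i j : ℕ} (hc : (i, j) ∉ ρ.cells) (hκ : insert (i, j) ρ.cells = κ.cells)
include hc hκ

lemma addBox_and_addDominoH_iff_cells_eq_insert :
    AddBox κ lam ∧ AddDominoH ρ lam ↔ lam.cells = insert (i, j + 1) κ.cells := by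
  constructor
  · rintro ⟨hbox, hle, a, b, h⟩
    have hκlam : κ.cells ⊆ lam.cells := hbox.1
    have hmem : (i, j) ∈ lam.cells \ ρ.cells :=
      mem_sdiff.2 ⟨hκlam (hκ ▸ mem_insert_self _ _), hc⟩
    rw [h, mem_insert, mem_singleton] at hmem
    obtain hleft | hright := hmem
    · cases hleft
      rw [← hκ, ← sdiff_union_of_subset (YoungDiagram.cells_subset_iff.2 hle), h]
      grind
    · cases hright
      have hb : (i, b) ∈ lam.cells \ ρ.cells := h ▸ mem_insert_self _ _
      have : (i, b) ∈ κ.cells := κ.up_left_mem le_rfl b.le_succ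
        (show (i, b + 1) ∈ κ.cells from hκ ▸ mem_insert_self _ _)
      grind
  · intro h
    have hnotMem : (i, j + 1) ∉ ρ.cells := fun h => hc (ρ.up_left_mem le_rfl j.le_succ h)
    have hbox : AddBox κ lam := addBox_iff_exists_insert.2 ⟨_, by grind, h.symm⟩
    refine ⟨hbox, ?_, i, j, by grind⟩
    rw [← YoungDiagram.cells_subset_iff]
    grind

lemma addBox_and_addDominoV_iff_cells_eq_erase :
    AddBox σ ρ ∧ AddDominoV σ κ ↔ ∃ k, i = k + 1 ∧ σ.cells = ρ.cells.erase (k, j) := by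
  constructor
  · rintro ⟨hbox, hle, a, b, h⟩
    have hσρ : σ.cells ⊆ ρ.cells := hbox.1
    have hmem : (i, j) ∈ κ.cells \ σ.cells :=
      mem_sdiff.2 ⟨hκ ▸ mem_insert_self _ _, fun h => hc (hσρ h)⟩
    rw [h, mem_insert, mem_singleton] at hmem
    obtain htop | hbot := hmem
    · cases htop
      have : (i + 1, j) ∈ κ.cells \ σ.cells := by simp [h]
      have : (i + 1, j) ∈ ρ.cells := by grind
      exact absurd (ρ.up_left_mem i.le_succ le_rfl this) hc
    · cases hbot
      refine ⟨a, rfl, ?_⟩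
      rw [← erase_insert hc, hκ, ← sdiff_union_of_subset (YoungDiagram.cells_subset_iff.2 hle), h]
      have hdisj : Disjoint {(a, j), (a + 1, j)} σ.cells := h ▸ sdiff_disjoint
      rw [disjoint_insert_left, disjoint_singleton_left] at hdisj
      grind
  · rintro ⟨k, rfl, h⟩
    have hk : (k, j) ∈ ρ.cells := by
      have : (k, j) ∈ κ.cells := κ.up_left_mem k.le_succ le_rfl
        (show (k + 1, j) ∈ κ.cells from hκ ▸ mem_insert_self _ _)
      grind
    have hbox : AddBox σ ρ := addBox_of_cells_eq_erase hk h
    refine ⟨hbox, ?_, k, j, by grind⟩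
    rw [← YoungDiagram.cells_subset_iff]
    grind

lemma exists_addDominoH_iff :
    (∃ lam, AddBox κ lam ∧ AddDominoH ρ lam) ↔ ∀ k, i = k + 1 → (k, j + 1) ∈ ρ := by
  simp only [addBox_and_addDominoH_iff_cells_eq_insert hc hκ, exists_cells_eq_insert_iff]
  constructor
  · rintro h k rfl
    have hk : (k, j + 1) ∈ insert (k + 1, j) ρ.cells :=
      hκ ▸ h (k, j + 1) (Prod.mk_lt_mk_of_lt_of_le k.lt_succ_self le_rfl)
    exact mem_of_mem_insert_of_ne hk (by simp)
  · rintro h ⟨a, b⟩ hab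
    rcases Prod.mk_lt_mk.1 hab with ⟨ha, hb⟩ | ⟨ha, hb⟩
    · obtain ⟨k, rfl⟩ := Nat.exists_eq_succ_of_ne_zero ha.ne_bot
      have hk : (k, j + 1) ∈ κ.cells := hκ ▸ mem_insert_of_mem (h k rfl)
      exact κ.up_left_mem (Nat.le_of_lt_succ ha) hb hk
    · have hij : (i, j) ∈ κ.cells := hκ ▸ mem_insert_self _ _
      exact κ.up_left_mem ha (Nat.le_of_lt_succ hb) hij

lemma exists_addDominoV_iff :
    (∃ σ, AddBox σ ρ ∧ AddDominoV σ κ) ↔ ∃ k, i = k + 1 ∧ (k, j + 1) ∉ ρ := by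
  simp only [addBox_and_addDominoV_iff_cells_eq_erase hc hκ]
  rw [exists_comm]
  simp only [exists_and_left, exists_cells_eq_erase_iff]
  refine exists_congr fun k => and_congr_right ?_
  rintro rfl
  constructor
  · exact fun h hk => h _ hk (Prod.mk_lt_mk_of_le_of_lt le_rfl j.lt_succ_self)
  · rintro hk ⟨a, b⟩ hab hlt
    rcases Prod.mk_lt_mk.1 hlt with ⟨ha, hb⟩ | ⟨ha, hb⟩
    · exact hc (ρ.up_left_mem ha hb hab)
    · exact hk (ρ.up_left_mem ha hb hab)

end AddedBox

open scoped Classical in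
lemma card_addDominoH_add_card_addDominoV (h : AddBox ρ κ) :
    #{lam ∈ upperCovers κ | AddDominoH ρ lam} + #{σ ∈ lowerCovers ρ | AddDominoV σ κ} = 1 := by
  obtain ⟨⟨i, j⟩, hc, hκ⟩ := addBox_iff_exists_insert.1 h
  have hH : #{lam ∈ upperCovers κ | AddDominoH ρ lam} ≤ 1 := by
    simp only [card_le_one_iff, mem_filter, mem_upperCovers,
      addBox_and_addDominoH_iff_cells_eq_insert hc hκ]
    exact fun h h' => YoungDiagram.ext (h.trans h'.symm)
  have hV : #{σ ∈ lowerCovers ρ | AddDominoV σ κ} ≤ 1 := by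
    simp only [card_le_one_iff, mem_filter, mem_lowerCovers,
      addBox_and_addDominoV_iff_cells_eq_erase hc hκ]
    rintro _ _ ⟨k, rfl, h⟩ ⟨_, ⟨⟩, h'⟩
    exact YoungDiagram.ext (h.trans h'.symm)
  have hHV : 0 < #{lam ∈ upperCovers κ | AddDominoH ρ lam} ↔
      ¬ 0 < #{σ ∈ lowerCovers ρ | AddDominoV σ κ} := by
    simp only [card_pos, filter_nonempty_iff, mem_upperCovers, mem_lowerCovers,
      exists_addDominoH_iff hc hκ, exists_addDominoV_iff hc hκ, not_exists, not_and, not_not]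
  omega

open scoped Classical in
lemma card_addDominoV_add_card_addDominoH (h : AddBox ρ κ) :
    #{lam ∈ upperCovers κ | AddDominoV ρ lam} + #{σ ∈ lowerCovers ρ | AddDominoH σ κ} = 1 := by
  rw [← card_addDominoH_add_card_addDominoV (addBox_transpose_iff.2 h)]
  congr 1 <;> refine card_equiv YoungDiagram.transposeOrderIso.toEquiv fun ν => ?_
  · simp [addBox_transpose_iff, addDominoH_transpose_iff]
  · simp [addBox_transpose_iff, addDominoV_transpose_iff]

lemma sum_upperCovers_dominoSign_of_addBox (h : AddBox ρ κ) :
    ∑ lam ∈ upperCovers κ, dominoSign ρ lam = ∑ σ ∈ lowerCovers ρ, dominoSign σ κ := by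
  have hHV := card_addDominoH_add_card_addDominoV h
  have hVH := card_addDominoV_add_card_addDominoH h
  simp only [dominoSign, sum_sub_distrib, sum_boole]
  omega

theorem sum_upperCovers_dominoSign (ρ κ : YoungDiagram) :
    ∑ lam ∈ upperCovers κ, dominoSign ρ lam = ∑ σ ∈ lowerCovers ρ, dominoSign σ κ := by
  by_cases h : AddBox ρ κ
  · exact sum_upperCovers_dominoSign_of_addBox h
  · exact sum_upperCovers_dominoSign_of_not_addBox h

open scoped Classical in
lemma finsum_mem_setOf_eq_sum_diagramsOfCard {M : Type*} [AddCommMonoid M] {f : YoungDiagram → M}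
    {P : YoungDiagram → Prop} (hP : ∀ lam, P lam → lam.card = n) :
    ∑ᶠ lam ∈ {lam | P lam}, f lam = ∑ lam ∈ diagramsOfCard n, if P lam then f lam else 0 := by
  have hset : {lam | P lam} = ((diagramsOfCard n).filter P : Set YoungDiagram) := by
    ext lam
    simpa using hP lam
  rw [hset, finsum_mem_coe_finset, sum_filter]

section DominoSum

variable {M : Type*} [AddCommGroup M] {f : YoungDiagram → M}

lemma sum_dominoSign_smul_eq_sum_lowerCovers
    (hf : ∀ lam ≠ ⊥, f lam = ∑ κ ∈ lowerCovers lam, f κ) (ρ : YoungDiagram) :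
    ∑ lam ∈ diagramsOfCard (ρ.card + 2), dominoSign ρ lam • f lam =
      ∑ σ ∈ lowerCovers ρ, ∑ κ ∈ diagramsOfCard (σ.card + 2), dominoSign σ κ • f κ := by
  have hne {lam : YoungDiagram} (h : lam ∈ diagramsOfCard (ρ.card + 2)) : lam ≠ ⊥ := by
    rintro rfl
    exact absurd (mem_diagramsOfCard.1 h) (Nat.succ_ne_zero _).symm
  have hcard {σ : YoungDiagram} (h : σ ∈ lowerCovers ρ) : σ.card + 2 = ρ.card + 1 :=
    congrArg Nat.succ (mem_lowerCovers.1 h).2.symm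
  calc
    _ = ∑ lam ∈ diagramsOfCard (ρ.card + 2), ∑ κ ∈ lowerCovers lam, dominoSign ρ lam • f κ :=
      sum_congr rfl fun lam h => by rw [hf lam (hne h), smul_sum]
    _ = ∑ κ ∈ diagramsOfCard (ρ.card + 1), ∑ lam ∈ upperCovers κ, dominoSign ρ lam • f κ := by
      refine sum_comm' fun lam κ => ?_
      simp only [mem_diagramsOfCard, mem_lowerCovers, mem_upperCovers]
      exact ⟨fun h => ⟨h.2, by have := h.2.2; omega⟩, fun h => ⟨by have := h.1.2; omega, h.1⟩⟩
    _ = ∑ κ ∈ diagramsOfCard (ρ.card + 1), ∑ σ ∈ lowerCovers ρ, dominoSign σ κ • f κ := by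
      simp only [← sum_smul, sum_upperCovers_dominoSign]
    _ = ∑ σ ∈ lowerCovers ρ, ∑ κ ∈ diagramsOfCard (ρ.card + 1), dominoSign σ κ • f κ := sum_comm
    _ = _ := sum_congr rfl fun σ h => by rw [hcard h]

theorem sum_dominoSign_smul_eq_zero
    (hf : ∀ lam ≠ ⊥, f lam = ∑ κ ∈ lowerCovers lam, f κ) (ρ : YoungDiagram) :
    ∑ lam ∈ diagramsOfCard (ρ.card + 2), dominoSign ρ lam • f lam = 0 := by
  induction hn : ρ.card using Nat.strong_induction_on generalizing ρ with
  | _ n ih =>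
    subst hn
    rw [sum_dominoSign_smul_eq_sum_lowerCovers hf]
    refine sum_eq_zero fun σ hσ => ih σ.card ?_ σ rfl
    have := (mem_lowerCovers.1 hσ).2
    omega

end DominoSum

end YoungLattice

theorem stmt7 (ρ : YoungDiagram) :
    (∑ᶠ lam ∈ {lam : YoungDiagram | AddDominoH ρ lam}, (SYTCount lam : ℤ))
      - ∑ᶠ lam ∈ {lam : YoungDiagram | AddDominoV ρ lam}, (SYTCount lam : ℤ) = 0 := by
  have hrec (lam : YoungDiagram) (h : lam ≠ ⊥) :
      (SYTCount lam : ℤ) = ∑ κ ∈ lowerCovers lam, (SYTCount κ : ℤ) := by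
    rw [SYTCount_eq_sum_lowerCovers h, Nat.cast_sum]
  rw [finsum_mem_setOf_eq_sum_diagramsOfCard fun _ => AddDominoH.card_eq,
    finsum_mem_setOf_eq_sum_diagramsOfCard fun _ => AddDominoV.card_eq, ← sum_sub_distrib]
  simpa [dominoSign, sub_mul] using sum_dominoSign_smul_eq_zero hrec ρ
end

section
/- For any non-empty partition λ, the Wronskian Laguerre polynomials satisfy F_λ·l_λ^(α)(x) = Σ_{μ⋖λ} (x+α−c(λ/μ))·F_μ·l_μ^(α)(x) + x(|λ|−1)·Σ_{ρ∈R₂⁻(λ)} (−1)^{ht(λ/ρ)}·F_ρ·l_ρ^(α)(x). -/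
open Polynomial Finset

/-- Modified Laguerre polynomials, defined by `l_0 = 1`, `l_1 = x + α`,
`l_n = (x+α-n+1) l_{n-1} + x(n-1) l_{n-2}`. -/
noncomputable def lm (α : ℝ) : ℕ → Polynomial ℝ
  | 0 => 1
  | 1 => X + C α
  | (n + 2) =>
      (X + C (α - ((n : ℝ) + 2) + 1)) * lm α (n + 1) + X * C ((n : ℝ) + 1) * lm α n

/-- The Wronskian of a family of polynomials. -/
noncomputable def Wr {r : ℕ} (p : Fin r → Polynomial ℝ) : Polynomial ℝ :=
  Matrix.det (Matrix.of fun i j : Fin r => derivative^[(i : ℕ)] (p j))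

/-- The Wronskian Laguerre polynomial
`l_μ^(α) = Wr[l_{n_1}, …, l_{n_r}] / ∏_{i<j} (n_j - n_i)` where `(n_i)` is the degree vector. -/
noncomputable def lW (α : ℝ) (μ : YoungDiagram) : Polynomial ℝ :=
  C (∏ p ∈ Finset.univ.filter (fun p : Fin (nrows μ) × Fin (nrows μ) => p.1 < p.2),
        ((degVec μ p.2 : ℝ) - (degVec μ p.1 : ℝ)))⁻¹
    * Wr (fun i => lm α (degVec μ i))

/-! Write `J_h(λ) = det (h (λ_j - j + i))`. Since `h m = l_m / m!` satisfies `h' m = h (m - 1)`, the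
Wronskian of the `l_{n_j}` is `± ∏ n_j! · J_h(λ)`, and with the same sign the Vandermonde product of
the `n_j` is `± ∏ n_j! · J_f(λ)` for `f m = 1 / m!`. As `F_λ = |λ|! J_f(λ)`, this gives
`F_λ l_λ = |λ|! J_h(λ)`.

The recurrence of the Laguerre polynomials reads `m h m = (x + α - m + 1) h (m - 1) + x h (m - 2)`.
Applied to each column of `J_h(λ)` in turn and summed, it expresses `|λ| J_h(λ)` through the
determinants in which a single `λ_j` is lowered by one or two. Such a determinant belongs to the
removal of a box or of a horizontal domino, or it vanishes because of a repeated column, or two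
adjacent columns are out of order, and swapping them removes a vertical domino with sign `-1`.
For `f` the recurrence is `m f m = f (m - 1)`, and the same argument turns the branching rule
`F_λ = ∑ F_μ` into `F_λ = |λ|! J_f(λ)`.
-/

namespace WronskianLaguerre

/-! ### Determinants of shifted sequences -/

section ShiftMatrix

variable {R : Type*}

/-- The matrix `(h (a j + i))` with `i, j < r`. For `a j = λ_j - j` its determinant is the
Jacobi–Trudi determinant of `λ` in the sequence `h`. The sequence `a` is defined on all of `ℕ`
so that the size `r` can be varied. -/
def shiftMatrix (h : ℤ → R) (r : ℕ) (a : ℕ → ℤ) : Matrix (Fin r) (Fin r) R :=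
  Matrix.of fun i j => h (a j + (i : ℕ))

lemma shiftMatrix_update (h : ℤ → R) (a : ℕ → ℤ) (j : Fin r) (v : ℤ) :
    shiftMatrix h r (Function.update a j v) =
      (shiftMatrix h r a).updateCol j (fun i => h (v + (i : ℕ))) := by
  ext i k
  rcases eq_or_ne k j with rfl | hk
  · simp [shiftMatrix]
  · simp [shiftMatrix, Matrix.updateCol_ne hk, Function.update_of_ne (Fin.val_ne_of_ne hk)]

end ShiftMatrix

section Determinant

variable {n R : Type*} [Fintype n] [DecidableEq n] [CommRing R]

lemma sum_det_updateCol_eq_sum_det_updateRow (A B : Matrix n n R) :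
    ∑ j, (A.updateCol j (B.col j)).det = ∑ i, (A.updateRow i (B.row i)).det := by
  have hcol (j : n) : (A.updateCol j (B.col j)).det = ∑ i, A.adjugate j i * B i j := by
    rw [← Matrix.cramer_apply, Matrix.cramer_eq_adjugate_mulVec]
    rfl
  have hrow (i : n) : (A.updateRow i (B.row i)).det = ∑ j, A.adjugate j i * B i j := by
    rw [← Matrix.cramer_transpose_apply, Matrix.cramer_eq_adjugate_mulVec,
      ← Matrix.adjugate_transpose]
    rfl
  simp_rw [hcol, hrow]
  exact Finset.sum_comm

lemma sum_det_updateCol_mul_col (A : Matrix n n R) (u : n → R) :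
    ∑ j, (A.updateCol j (fun i => u i * A i j)).det = (∑ i, u i) * A.det := by
  calc ∑ j, (A.updateCol j (fun i => u i * A i j)).det
      = ∑ i, (A.updateRow i (u i • A i)).det :=
        sum_det_updateCol_eq_sum_det_updateRow A (Matrix.of fun i j => u i * A i j)
    _ = (∑ i, u i) * A.det := by
        simp only [Matrix.det_updateRow_smul, Matrix.updateRow_eq_self, Finset.sum_mul]

variable {h : ℤ → R} {r : ℕ} {a : ℕ → ℤ}

lemma det_shiftMatrix_comp_swap (h : ℤ → R) (a : ℕ → ℤ) {j k : ℕ} (hj : j < r) (hk : k < r)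
    (hjk : j ≠ k) :
    (shiftMatrix h r (a ∘ Equiv.swap j k)).det = -(shiftMatrix h r a).det := by
  have hperm := Matrix.det_permute' (Equiv.swap (⟨j, hj⟩ : Fin r) ⟨k, hk⟩) (shiftMatrix h r a)
  rw [Equiv.Perm.sign_swap (by simpa using hjk)] at hperm
  simp only [Units.val_neg, Units.val_one, Int.cast_neg, Int.cast_one, neg_one_mul] at hperm
  rw [← hperm]
  congr 1
  ext i l
  simp only [shiftMatrix, Matrix.of_apply, Matrix.submatrix_apply, Function.comp_apply, id_eq,
    Equiv.swap_apply_def, Fin.ext_iff]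
  split_ifs <;> rfl

section Stable

variable (h_neg : ∀ m < 0, h m = 0) (h_zero : h 0 = 1)
include h_neg h_zero

lemma det_shiftMatrix_succ (ha : a r = -r) :
    (shiftMatrix h (r + 1) a).det = (shiftMatrix h r a).det := by
  have hlast (i : Fin r) : shiftMatrix h (r + 1) a i.castSucc (Fin.last r) = 0 := by
    apply h_neg
    simp only [Fin.val_last, Fin.val_castSucc, ha]
    omega
  have hcorner : shiftMatrix h (r + 1) a (Fin.last r) (Fin.last r) = 1 := by
    simp [shiftMatrix, ha, h_zero]
  rw [Matrix.det_succ_column _ (Fin.last r), Fin.sum_univ_castSucc]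
  simp only [hlast, hcorner, Fin.succAbove_last, Even.neg_one_pow (Even.add_self _), mul_zero,
    zero_mul, Finset.sum_const_zero, zero_add, one_mul]
  rfl

lemma det_shiftMatrix_of_le {s : ℕ} (hrs : r ≤ s) (ha : ∀ k, r ≤ k → a k = -k) :
    (shiftMatrix h s a).det = (shiftMatrix h r a).det := by
  induction s, hrs using Nat.le_induction with
  | base => rfl
  | succ s hs ih => rw [det_shiftMatrix_succ h_neg h_zero (ha s hs), ih]

lemma det_shiftMatrix_eq_zero (ha : ∀ k, r ≤ k → a k = -k) {j k : ℕ} (hjk : j ≠ k)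
    (hajk : a j = a k) : (shiftMatrix h r a).det = 0 := by
  rw [← det_shiftMatrix_of_le h_neg h_zero (show r ≤ r + j + k + 1 by omega) ha]
  exact Matrix.det_zero_of_column_eq (i := ⟨j, by omega⟩) (j := ⟨k, by omega⟩)
    (by simpa using hjk) fun i => by simp [shiftMatrix, hajk]

end Stable

lemma sum_det_updateCol_shift_eq_zero (h : ℤ → R) (r : ℕ) (a : ℕ → ℤ) :
    ∑ j : Fin r, ((shiftMatrix h r a).updateCol j
      (fun i => ((i : ℕ) : R) * h (a j - 1 + (i : ℕ)))).det = 0 := by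
  set A := shiftMatrix h r a
  let B : Matrix (Fin r) (Fin r) R := Matrix.of fun i j => ((i : ℕ) : R) * h (a j - 1 + (i : ℕ))
  refine (sum_det_updateCol_eq_sum_det_updateRow A B).trans (Finset.sum_eq_zero fun i _ => ?_)
  obtain ⟨_ | k, hk⟩ := i
  · exact Matrix.det_eq_zero_of_row_eq_zero ⟨0, hk⟩ fun j => by simp [B]
  · have hrow : B.row ⟨k + 1, hk⟩ = ((k + 1 : ℕ) : R) • A ⟨k, by omega⟩ := by
      ext j
      simp [A, B, shiftMatrix, sub_add_add_cancel]
    rw [hrow, Matrix.det_updateRow_smul, Matrix.det_updateRow_eq_zero (by simp [Fin.ext_iff]),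
      mul_zero]

section Recurrence

variable {x b c : R}
  (h_rec : ∀ m : ℤ, (m : R) * h m = (x - b * ((m : R) - 1)) * h (m - 1) + c * h (m - 2))
include h_rec

lemma det_updateCol_shift_recurrence (r : ℕ) (a : ℕ → ℤ) (j : Fin r) :
    (a j : R) * (shiftMatrix h r a).det
        + ((shiftMatrix h r a).updateCol j
            (fun i => ((i : ℕ) : R) * shiftMatrix h r a i j)).det
      = (x - b * ((a j : R) - 1)) * (shiftMatrix h r (Function.update a j (a j - 1))).det
        + c * (shiftMatrix h r (Function.update a j (a j - 2))).det
        - b * ((shiftMatrix h r a).updateCol j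
            (fun i => ((i : ℕ) : R) * h (a j - 1 + (i : ℕ)))).det := by
  have hself : (shiftMatrix h r a).det =
      ((shiftMatrix h r a).updateCol j (fun i => shiftMatrix h r a i j)).det := by
    rw [Matrix.updateCol_eq_self]
  rw [hself, shiftMatrix_update, shiftMatrix_update, sub_eq_add_neg, ← neg_mul]
  simp only [← Matrix.det_updateCol_smul, ← Matrix.det_updateCol_add]
  congr 2
  ext i
  have hm := h_rec (a j + (i : ℕ))
  rw [add_sub_right_comm, add_sub_right_comm] at hm
  push_cast at hm
  simp only [shiftMatrix, Matrix.of_apply, Pi.add_apply, Pi.smul_apply, smul_eq_mul]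
  linear_combination hm

/- The recurrence for `h` applied to column `j` leaves two error terms in which row `i` is weighted
by `i`. Summed over `j` they become sums over rows: one is a multiple of the determinant, the other
vanishes because each of its rows is a multiple of the row above. -/
lemma det_shiftMatrix_recurrence (r : ℕ) (a : ℕ → ℤ) :
    ((∑ j ∈ range r, (a j + j) : ℤ) : R) * (shiftMatrix h r a).det =
      ∑ j ∈ range r,
        (x - b * ((a j : R) - 1)) * (shiftMatrix h r (Function.update a j (a j - 1))).det
      + c * ∑ j ∈ range r, (shiftMatrix h r (Function.update a j (a j - 2))).det := by
  have hsum := Finset.sum_congr rfl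
    fun j (_ : j ∈ Finset.univ) => det_updateCol_shift_recurrence h_rec r a j
  rw [Finset.sum_add_distrib, Finset.sum_sub_distrib, Finset.sum_add_distrib, ← Finset.sum_mul,
    ← Finset.mul_sum, ← Finset.mul_sum, sum_det_updateCol_mul_col,
    sum_det_updateCol_shift_eq_zero] at hsum
  simp only [Finset.sum_range, Int.cast_sum, Int.cast_add, Int.cast_natCast,
    Finset.sum_add_distrib]
  linear_combination hsum

end Recurrence

end Determinant

/-! ### Removing boxes and dominoes -/

section YoungDiagram

variable {lam mu : YoungDiagram} {c : ℕ × ℕ} {i j : ℕ}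

/-- The Young diagram obtained from `lam` by removing every cell weakly south-east of `c`.
Removing a box or a domino is the case where these cells form a box or a domino. -/
def eraseIci (lam : YoungDiagram) (c : ℕ × ℕ) : YoungDiagram where
  cells := {d ∈ lam.cells | ¬ c ≤ d}
  isLowerSet := by
    intro d e hed hd
    simp only [Finset.coe_filter, Set.mem_ofPred_eq, YoungDiagram.mem_cells] at hd ⊢
    exact ⟨lam.isLowerSet hed hd.1, fun hce => hd.2 (hce.trans hed)⟩

lemma mem_eraseIci {d : ℕ × ℕ} : d ∈ eraseIci lam c ↔ d ∈ lam ∧ ¬ c ≤ d := by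
  simp [eraseIci, ← YoungDiagram.mem_cells]

lemma eraseIci_le (lam : YoungDiagram) (c : ℕ × ℕ) : eraseIci lam c ≤ lam :=
  fun _ hd => (mem_eraseIci.mp hd).1

lemma rowLen_eraseIci (lam : YoungDiagram) (c : ℕ × ℕ) (k : ℕ) :
    (eraseIci lam c).rowLen k =
      if c.1 ≤ k then min (lam.rowLen k) c.2 else lam.rowLen k := by
  refine eq_of_forall_lt_iff fun j => ?_
  rw [← YoungDiagram.mem_iff_lt_rowLen, mem_eraseIci, YoungDiagram.mem_iff_lt_rowLen,
    Prod.le_def]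
  split_ifs with hk <;> simp [hk]

lemma eraseIci_injOn (lam : YoungDiagram) : Set.InjOn (eraseIci lam) {c | c ∈ lam} := by
  have h_le {c d : ℕ × ℕ} (hc : c ∈ lam) (hcd : eraseIci lam c = eraseIci lam d) : d ≤ c := by
    have hc' : c ∉ eraseIci lam d := by simp [← hcd, mem_eraseIci]
    simpa [mem_eraseIci, hc] using hc'
  exact fun c hc d hd hcd => le_antisymm (h_le hd hcd.symm) (h_le hc hcd)

lemma le_and_sdiff_eq_iff {S : Finset (ℕ × ℕ)} (hcS : c ∈ S) (hS : ∀ d ∈ S, c ≤ d) :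
    mu ≤ lam ∧ lam.cells \ mu.cells = S ↔
      {d ∈ lam.cells | c ≤ d} = S ∧ eraseIci lam c = mu := by
  constructor
  · rintro ⟨hle, rfl⟩
    have hc : c ∉ mu.cells := (Finset.mem_sdiff.mp hcS).2
    have hmem {d : ℕ × ℕ} (hd : d ∈ lam.cells) : c ≤ d ↔ d ∉ mu.cells :=
      ⟨fun hcd hdmu => hc (mu.isLowerSet hcd hdmu),
        fun hdmu => hS d (Finset.mem_sdiff.mpr ⟨hd, hdmu⟩)⟩
    constructor
    · ext d
      simp +contextual only [Finset.mem_filter, Finset.mem_sdiff, hmem]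
    · refine YoungDiagram.ext (Finset.ext fun d => ?_)
      simp +contextual only [eraseIci, Finset.mem_filter, hmem, not_not]
      exact and_iff_right_of_imp fun hd => hle hd
  · rintro ⟨rfl, rfl⟩
    exact ⟨Finset.filter_subset _ _, by simp [eraseIci, Finset.filter_not]⟩

lemma filter_le_eq_singleton_iff :
    {d ∈ lam.cells | c ≤ d} = {c} ↔ Maximal (· ∈ lam) c := by
  simp only [Finset.eq_singleton_iff_unique_mem, Finset.mem_filter, YoungDiagram.mem_cells,
    le_refl, and_true, maximal_iff, and_imp, eq_comm]

lemma filter_le_eq_iff {S : Finset (ℕ × ℕ)} :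
    {d ∈ lam.cells | (i, j) ≤ d} = S ↔
      ∀ k l, (l < lam.rowLen k ∧ i ≤ k ∧ j ≤ l) ↔ (k, l) ∈ S := by
  simp only [Finset.ext_iff, Prod.forall, Finset.mem_filter, YoungDiagram.mem_cells,
    YoungDiagram.mem_iff_lt_rowLen, Prod.mk_le_mk]

lemma filter_le_eq_box_iff :
    {d ∈ lam.cells | (i, j) ≤ d} = {(i, j)} ↔ lam.rowLen (i + 1) ≤ j ∧ lam.rowLen i = j + 1 := by
  simp only [filter_le_eq_iff, Finset.mem_singleton, Prod.mk.injEq]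
  constructor
  · intro h
    have := h i j
    have := h i (j + 1)
    have := h (i + 1) j
    omega
  · rintro ⟨h_next, h_row⟩ k l
    rcases lt_trichotomy k i with hk | rfl | hk
    · omega
    · omega
    · have := lam.rowLen_anti (i + 1) k hk
      omega

lemma filter_le_eq_hDomino_iff :
    {d ∈ lam.cells | (i, j) ≤ d} = {(i, j), (i, j + 1)} ↔
      lam.rowLen (i + 1) ≤ j ∧ lam.rowLen i = j + 2 := by
  simp only [filter_le_eq_iff, Finset.mem_insert, Finset.mem_singleton, Prod.mk.injEq]
  constructor
  · intro h
    have := h i (j + 1)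
    have := h i (j + 2)
    have := h (i + 1) j
    omega
  · rintro ⟨h_next, h_row⟩ k l
    rcases lt_trichotomy k i with hk | rfl | hk
    · omega
    · omega
    · have := lam.rowLen_anti (i + 1) k hk
      omega

lemma filter_le_eq_vDomino_iff :
    {d ∈ lam.cells | (i, j) ≤ d} = {(i, j), (i + 1, j)} ↔
      lam.rowLen (i + 2) ≤ j ∧ lam.rowLen (i + 1) = j + 1 ∧ lam.rowLen i = j + 1 := by
  simp only [filter_le_eq_iff, Finset.mem_insert, Finset.mem_singleton, Prod.mk.injEq]
  constructor
  · intro h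
    have := h i j
    have := h i (j + 1)
    have := h (i + 1) j
    have := h (i + 1) (j + 1)
    have := h (i + 2) j
    omega
  · rintro ⟨h_below, h_next, h_row⟩ k l
    rcases lt_or_ge k (i + 2) with hk | hk
    · rcases lt_trichotomy k i with hki | rfl | hki
      · omega
      · omega
      · obtain rfl : k = i + 1 := by omega
        omega
    · have := lam.rowLen_anti (i + 2) k hk
      omega

lemma addBox_iff : AddBox mu lam ↔ ∃ c, Maximal (· ∈ lam) c ∧ eraseIci lam c = mu := by
  have hcard : AddBox mu lam ↔ mu ≤ lam ∧ ∃ c, lam.cells \ mu.cells = {c} := by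
    refine and_congr_right fun hle => ?_
    have := Finset.card_sdiff_add_card_eq_card (s := mu.cells) hle
    rw [← Finset.card_eq_one, YoungDiagram.card, YoungDiagram.card]
    omega
  simp only [hcard, ← exists_and_left, ← filter_le_eq_singleton_iff]
  exact exists_congr fun c => le_and_sdiff_eq_iff (by simp) (by simp)

lemma addBox_iff_rowLen : AddBox mu lam ↔
    ∃ i, lam.rowLen (i + 1) < lam.rowLen i ∧ eraseIci lam (i, lam.rowLen i - 1) = mu := by
  simp only [addBox_iff, ← filter_le_eq_singleton_iff, Prod.exists, filter_le_eq_box_iff]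
  refine exists_congr fun i => ⟨?_, ?_⟩
  · rintro ⟨j, ⟨h_next, h_row⟩, rfl⟩
    exact ⟨by omega, by rw [h_row, Nat.add_sub_cancel]⟩
  · rintro ⟨h_next, rfl⟩
    exact ⟨_, ⟨by omega, by omega⟩, rfl⟩

lemma addDominoH_iff : AddDominoH mu lam ↔
    ∃ i, lam.rowLen (i + 1) + 2 ≤ lam.rowLen i ∧ eraseIci lam (i, lam.rowLen i - 2) = mu := by
  simp only [AddDominoH, ← exists_and_left]
  refine exists_congr fun i => ?_
  have hsdiff (j : ℕ) := le_and_sdiff_eq_iff (lam := lam) (mu := mu) (c := (i, j))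
    (S := {(i, j), (i, j + 1)}) (by simp) (by simp)
  simp only [hsdiff, filter_le_eq_hDomino_iff]
  constructor
  · rintro ⟨j, ⟨h_next, h_row⟩, rfl⟩
    exact ⟨by omega, by rw [h_row, Nat.add_sub_cancel]⟩
  · rintro ⟨h_next, rfl⟩
    exact ⟨_, ⟨by omega, by omega⟩, rfl⟩

lemma addDominoV_iff : AddDominoV mu lam ↔
    ∃ i, (lam.rowLen (i + 2) < lam.rowLen (i + 1) ∧ lam.rowLen (i + 1) = lam.rowLen i) ∧
      eraseIci lam (i, lam.rowLen i - 1) = mu := by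
  simp only [AddDominoV, ← exists_and_left]
  refine exists_congr fun i => ?_
  have hsdiff (j : ℕ) := le_and_sdiff_eq_iff (lam := lam) (mu := mu) (c := (i, j))
    (S := {(i, j), (i + 1, j)}) (by simp) (by simp)
  simp only [hsdiff, filter_le_eq_vDomino_iff]
  constructor
  · rintro ⟨j, ⟨h_below, h_next, h_row⟩, rfl⟩
    exact ⟨by omega, by rw [h_row, Nat.add_sub_cancel]⟩
  · rintro ⟨⟨h_below, h_next⟩, rfl⟩
    exact ⟨_, ⟨by omega, by omega, by omega⟩, rfl⟩

lemma card_eq_card_add_card_of_sdiff_eq {S : Finset (ℕ × ℕ)} (hle : mu ≤ lam)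
    (hS : lam.cells \ mu.cells = S) : lam.card = mu.card + #S := by
  rw [← hS, add_comm]
  exact (Finset.card_sdiff_add_card_eq_card hle).symm

lemma card_eq_of_addDominoH (hmu : AddDominoH mu lam) : lam.card = mu.card + 2 := by
  obtain ⟨hle, i, j, hS⟩ := hmu
  simpa using card_eq_card_add_card_of_sdiff_eq hle hS

lemma card_eq_of_addDominoV (hmu : AddDominoV mu lam) : lam.card = mu.card + 2 := by
  obtain ⟨hle, i, j, hS⟩ := hmu
  simpa using card_eq_card_add_card_of_sdiff_eq hle hS

lemma skewContent_eraseIci (hi : lam.rowLen (i + 1) < lam.rowLen i) :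
    skewContent lam (eraseIci lam (i, lam.rowLen i - 1)) = (lam.rowLen i : ℤ) - 1 - i := by
  have hS := filter_le_eq_box_iff.mpr ⟨Nat.le_sub_one_of_lt hi, by omega⟩
  rw [skewContent, (le_and_sdiff_eq_iff (by simp) (by simp)).mpr ⟨hS, rfl⟩ |>.2,
    Finset.sum_singleton]
  push_cast [Nat.one_le_of_lt hi]
  rfl

lemma finite_Iic (lam : YoungDiagram) : (Set.Iic lam).Finite :=
  (lam.cells.powerset.finite_toSet.preimage
    (fun _ _ _ _ h_eq => YoungDiagram.ext h_eq : Set.InjOn YoungDiagram.cells _)).subset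
    fun _ h_le => Finset.mem_powerset.mpr h_le

lemma cells_nonempty (h : lam ≠ ⊥) : lam.cells.Nonempty :=
  Finset.nonempty_iff_ne_empty.mpr fun h_empty => h (YoungDiagram.ext h_empty)

lemma rowLen_pos_iff : 0 < lam.rowLen i ↔ i < nrows lam := by
  rw [nrows, ← YoungDiagram.mem_iff_lt_rowLen, YoungDiagram.mem_iff_lt_colLen]

lemma rowLen_eq_zero (hi : nrows lam ≤ i) : lam.rowLen i = 0 :=
  Nat.eq_zero_of_not_pos (mt rowLen_pos_iff.mp hi.not_gt)

lemma nrows_mono (hle : mu ≤ lam) : nrows mu ≤ nrows lam :=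
  le_of_forall_lt fun _ hi => YoungDiagram.mem_iff_lt_colLen.mp <|
    hle (YoungDiagram.mem_iff_lt_colLen.mpr hi)

lemma sum_rowLen_eq_card (lam : YoungDiagram) :
    ∑ i ∈ range (nrows lam), lam.rowLen i = lam.card := by
  have h_fst : ∀ c ∈ lam.cells, c.1 ∈ range (nrows lam) := fun c hc =>
    Finset.mem_range.mpr <| rowLen_pos_iff.mp <|
      pos_of_gt <| YoungDiagram.mem_iff_lt_rowLen.mp <| (YoungDiagram.mem_cells c).mp hc
  rw [YoungDiagram.card, Finset.card_eq_sum_card_fiberwise h_fst]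
  simp only [YoungDiagram.rowLen_eq_card, YoungDiagram.row]

lemma finsum_mem_eraseIci {M : Type*} [AddCommMonoid M] (w : YoungDiagram → M) {p : ℕ → Prop}
    [DecidablePred p] {g : ℕ → ℕ} (hg : ∀ i, p i → g i < lam.rowLen i) :
    ∑ᶠ mu ∈ {mu | ∃ i, p i ∧ eraseIci lam (i, g i) = mu}, w mu =
      ∑ i ∈ range (nrows lam), if p i then w (eraseIci lam (i, g i)) else 0 := by
  have h_inj : Set.InjOn (fun i => eraseIci lam (i, g i)) {i | p i} := by
    refine (eraseIci_injOn lam).comp (fun i _ k _ hik => congrArg Prod.fst hik) fun i hi => ?_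
    exact YoungDiagram.mem_iff_lt_rowLen.mpr (hg i hi)
  have h_rows : {i | p i} = ↑({i ∈ range (nrows lam) | p i} : Finset ℕ) := by
    ext i
    simpa using fun hi => rowLen_pos_iff.mp (pos_of_gt (hg i hi))
  rw [← Finset.sum_filter, ← finsum_mem_coe_finset, ← h_rows, ← finsum_mem_image h_inj]
  rfl

end YoungDiagram

/-! ### Jacobi–Trudi determinants -/

section JacobiTrudi

variable {R : Type*} [CommRing R] {h : ℤ → R} {lam : YoungDiagram} {j r : ℕ}

/-- The sequence `λ_j - j`, the columns of the Jacobi–Trudi determinant. -/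
def shiftedRowLen (lam : YoungDiagram) (j : ℕ) : ℤ := (lam.rowLen j : ℤ) - j

/-- The Jacobi–Trudi determinant `det (h_{λ_j - j + i})`: the Schur function of `lam` when `h` is
the sequence of complete homogeneous symmetric functions. -/
def jacobiTrudi (h : ℤ → R) (lam : YoungDiagram) : R :=
  (shiftMatrix h (nrows lam) (shiftedRowLen lam)).det

lemma jacobiTrudi_bot (h : ℤ → R) : jacobiTrudi h ⊥ = 1 := by
  have h_nrows : nrows ⊥ = 0 := Nat.eq_zero_of_not_pos fun h_pos =>
    YoungDiagram.notMem_bot (0, 0) (YoungDiagram.mem_iff_lt_colLen.mpr h_pos)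
  rw [jacobiTrudi, h_nrows, Matrix.det_fin_zero]

lemma shiftedRowLen_of_le {k : ℕ} (hk : nrows lam ≤ k) : shiftedRowLen lam k = -k := by
  simp [shiftedRowLen, rowLen_eq_zero hk]

lemma update_shiftedRowLen_of_le (hj : j < nrows lam) (v : ℤ) {k : ℕ} (hk : nrows lam ≤ k) :
    Function.update (shiftedRowLen lam) j v k = -k := by
  rw [Function.update_of_ne (hj.trans_le hk).ne', shiftedRowLen_of_le hk]

lemma shiftedRowLen_eraseIci {d : ℕ} (hd : lam.rowLen (j + 1) + d ≤ lam.rowLen j) :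
    shiftedRowLen (eraseIci lam (j, lam.rowLen j - d)) =
      Function.update (shiftedRowLen lam) j (shiftedRowLen lam j - d) := by
  funext k
  rw [shiftedRowLen, rowLen_eraseIci, Function.update_apply]
  rcases lt_trichotomy k j with hk | rfl | hk
  · simp [shiftedRowLen, hk.not_ge, hk.ne]
  · simp only [shiftedRowLen, le_refl, if_true]
    omega
  · have := lam.rowLen_anti (j + 1) k hk
    simp only [shiftedRowLen, hk.le, hk.ne', if_true, if_false]
    omega

lemma shiftedRowLen_eraseIci_vDomino (h_below : lam.rowLen (j + 2) < lam.rowLen (j + 1))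
    (h_next : lam.rowLen (j + 1) = lam.rowLen j) :
    shiftedRowLen (eraseIci lam (j, lam.rowLen j - 1)) =
      Function.update (shiftedRowLen lam) j (shiftedRowLen lam j - 2) ∘ Equiv.swap j (j + 1) := by
  funext k
  rw [shiftedRowLen, rowLen_eraseIci, Function.comp_apply]
  rcases lt_or_ge k j with hk | hk
  · rw [Equiv.swap_apply_of_ne_of_ne hk.ne (by omega), Function.update_of_ne hk.ne]
    simp [shiftedRowLen, hk.not_ge]
  · rcases eq_or_lt_of_le hk with rfl | hk1
    · simp only [Equiv.swap_apply_left, Function.update_of_ne (show j + 1 ≠ j by omega),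
        shiftedRowLen, le_refl, if_true]
      omega
    · rcases eq_or_lt_of_le (show j + 1 ≤ k from hk1) with rfl | hk2
      · simp only [Equiv.swap_apply_right, Function.update_self,
          shiftedRowLen, hk, if_true]
        omega
      · have := lam.rowLen_anti (j + 2) k hk2
        rw [Equiv.swap_apply_of_ne_of_ne hk1.ne' hk2.ne', Function.update_of_ne hk1.ne',
          shiftedRowLen, if_pos hk]
        omega

section Stable

variable (h_neg : ∀ m < 0, h m = 0) (h_zero : h 0 = 1)
include h_neg h_zero

lemma det_shiftMatrix_shiftedRowLen (hr : nrows lam ≤ r) :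
    (shiftMatrix h r (shiftedRowLen lam)).det = jacobiTrudi h lam :=
  det_shiftMatrix_of_le h_neg h_zero hr fun _ => shiftedRowLen_of_le

lemma det_shiftMatrix_shiftedRowLen_eraseIci (c : ℕ × ℕ) :
    (shiftMatrix h (nrows lam) (shiftedRowLen (eraseIci lam c))).det =
      jacobiTrudi h (eraseIci lam c) :=
  det_shiftMatrix_shiftedRowLen h_neg h_zero (nrows_mono (eraseIci_le lam c))

lemma det_update_shiftedRowLen_sub_one (hj : j < nrows lam) :
    (shiftMatrix h (nrows lam)
        (Function.update (shiftedRowLen lam) j (shiftedRowLen lam j - 1))).det =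
      if lam.rowLen (j + 1) < lam.rowLen j then jacobiTrudi h (eraseIci lam (j, lam.rowLen j - 1))
      else 0 := by
  split_ifs with h_lt
  · rw [← det_shiftMatrix_shiftedRowLen_eraseIci h_neg h_zero, shiftedRowLen_eraseIci h_lt,
      Nat.cast_one]
  · refine det_shiftMatrix_eq_zero h_neg h_zero (fun _ => update_shiftedRowLen_of_le hj _)
      (j.lt_succ_self.ne) ?_
    have := lam.rowLen_anti j (j + 1) j.le_succ
    rw [Function.update_self, Function.update_of_ne (show j + 1 ≠ j by omega), shiftedRowLen,
      shiftedRowLen]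
    omega

lemma det_update_shiftedRowLen_sub_two (hj : j < nrows lam) :
    (shiftMatrix h (nrows lam)
        (Function.update (shiftedRowLen lam) j (shiftedRowLen lam j - 2))).det =
      (if lam.rowLen (j + 1) + 2 ≤ lam.rowLen j then
          jacobiTrudi h (eraseIci lam (j, lam.rowLen j - 2)) else 0)
        - if lam.rowLen (j + 2) < lam.rowLen (j + 1) ∧ lam.rowLen (j + 1) = lam.rowLen j then
          jacobiTrudi h (eraseIci lam (j, lam.rowLen j - 1)) else 0 := by
  have h_anti := lam.rowLen_anti j (j + 1) j.le_succ
  have h_anti' := lam.rowLen_anti (j + 1) (j + 2) (j + 1).le_succ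
  have h_repeat {k : ℕ} (hjk : j < k) (hk : shiftedRowLen lam j - 2 = shiftedRowLen lam k) :
      (shiftMatrix h (nrows lam)
        (Function.update (shiftedRowLen lam) j (shiftedRowLen lam j - 2))).det = 0 :=
    det_shiftMatrix_eq_zero h_neg h_zero (fun _ => update_shiftedRowLen_of_le hj _) hjk.ne
      (by rw [Function.update_self, Function.update_of_ne hjk.ne', hk])
  split_ifs with h_two h_eq h_eq
  · omega
  · rw [← det_shiftMatrix_shiftedRowLen_eraseIci h_neg h_zero, shiftedRowLen_eraseIci h_two,
      Nat.cast_two, sub_zero]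
  · have hj' : j + 1 < nrows lam := rowLen_pos_iff.mp (pos_of_gt h_eq.1)
    rw [← det_shiftMatrix_shiftedRowLen_eraseIci h_neg h_zero,
      shiftedRowLen_eraseIci_vDomino h_eq.1 h_eq.2,
      det_shiftMatrix_comp_swap h _ hj hj' j.lt_succ_self.ne, zero_sub, neg_neg]
  · rw [sub_zero]
    rcases lt_or_ge (lam.rowLen (j + 1)) (lam.rowLen j) with h_lt | h_ge
    · exact h_repeat (k := j + 1) (by omega) (by simp only [shiftedRowLen]; omega)
    · exact h_repeat (k := j + 2) (by omega) (by simp only [shiftedRowLen]; omega)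

lemma jacobiTrudi_recurrence {x b c : R}
    (h_rec : ∀ m : ℤ, (m : R) * h m = (x - b * ((m : R) - 1)) * h (m - 1) + c * h (m - 2))
    (lam : YoungDiagram) :
    (lam.card : R) * jacobiTrudi h lam =
      ∑ᶠ mu ∈ {mu | AddBox mu lam}, (x - b * (skewContent lam mu : R)) * jacobiTrudi h mu
        + c * (∑ᶠ mu ∈ {mu | AddDominoH mu lam}, jacobiTrudi h mu
          - ∑ᶠ mu ∈ {mu | AddDominoV mu lam}, jacobiTrudi h mu) := by
  have h_card : ∑ j ∈ range (nrows lam), (shiftedRowLen lam j + j) = (lam.card : ℤ) := by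
    simp [shiftedRowLen, ← sum_rowLen_eq_card]
  have h_det := det_shiftMatrix_recurrence h_rec (nrows lam) (shiftedRowLen lam)
  rw [h_card, Int.cast_natCast] at h_det
  simp_rw [addBox_iff_rowLen, addDominoH_iff, addDominoV_iff]
  rw [finsum_mem_eraseIci _ fun i hi => by omega, finsum_mem_eraseIci _ fun i hi => by omega,
    finsum_mem_eraseIci _ fun i hi => by omega, ← Finset.sum_sub_distrib]
  refine h_det.trans (congrArg₂ _ (Finset.sum_congr rfl fun j hj => ?_)
    (congrArg _ (Finset.sum_congr rfl fun j hj => ?_)))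
  · rw [det_update_shiftedRowLen_sub_one h_neg h_zero (Finset.mem_range.mp hj), mul_ite, mul_zero]
    split_ifs with h_lt
    · rw [skewContent_eraseIci h_lt, shiftedRowLen]
      push_cast
      ring
    · rfl
  · exact det_update_shiftedRowLen_sub_two h_neg h_zero (Finset.mem_range.mp hj)

lemma factorial_mul_jacobiTrudi_recurrence {x b c : R}
    (h_rec : ∀ m : ℤ, (m : R) * h m = (x - b * ((m : R) - 1)) * h (m - 1) + c * h (m - 2))
    (hlam : lam ≠ ⊥) :
    (lam.card.factorial : R) * jacobiTrudi h lam =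
      ∑ᶠ mu ∈ {mu | AddBox mu lam},
          (x - b * (skewContent lam mu : R)) * ((mu.card.factorial : R) * jacobiTrudi h mu)
        + c * ((lam.card : R) - 1) *
          (∑ᶠ mu ∈ {mu | AddDominoH mu lam}, (mu.card.factorial : R) * jacobiTrudi h mu
            - ∑ᶠ mu ∈ {mu | AddDominoV mu lam}, (mu.card.factorial : R) * jacobiTrudi h mu) := by
  have h_box :
      ((lam.card - 1).factorial : R) * ∑ᶠ mu ∈ {mu | AddBox mu lam},
          (x - b * (skewContent lam mu : R)) * jacobiTrudi h mu =
        ∑ᶠ mu ∈ {mu | AddBox mu lam},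
          (x - b * (skewContent lam mu : R)) * ((mu.card.factorial : R) * jacobiTrudi h mu) := by
    rw [mul_finsum_mem' _ _ ((finite_Iic lam).subset fun _ hmu => hmu.1)]
    refine finsum_mem_congr rfl fun mu hmu => ?_
    rw [hmu.2, Nat.add_sub_cancel, mul_left_comm]
  have h_domino {p : YoungDiagram → Prop} (h_le : ∀ mu, p mu → mu ≤ lam)
      (h_card : ∀ mu, p mu → lam.card = mu.card + 2) :
      ((lam.card - 1).factorial : R) * ∑ᶠ mu ∈ {mu | p mu}, jacobiTrudi h mu =
        ((lam.card : R) - 1) *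
          ∑ᶠ mu ∈ {mu | p mu}, (mu.card.factorial : R) * jacobiTrudi h mu := by
    have h_fin : {mu | p mu}.Finite := (finite_Iic lam).subset h_le
    rw [mul_finsum_mem' _ _ h_fin, mul_finsum_mem' _ _ h_fin]
    refine finsum_mem_congr rfl fun mu hmu => ?_
    rw [h_card mu hmu, Nat.add_succ_sub_one, Nat.factorial_succ]
    push_cast
    ring
  rw [← Nat.mul_factorial_pred (cells_nonempty hlam).card_ne_zero, mul_comm lam.card,
    Nat.cast_mul, mul_assoc, jacobiTrudi_recurrence h_neg h_zero h_rec]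
  linear_combination h_box
    + c * h_domino (p := (AddDominoH · lam)) (fun _ => And.left) (fun _ => card_eq_of_addDominoH)
    - c * h_domino (p := (AddDominoV · lam)) (fun _ => And.left) (fun _ => card_eq_of_addDominoV)

end Stable

end JacobiTrudi

/-! ### Linear extensions and standard Young tableaux -/

section LinearExtension

variable {α : Type*} [PartialOrder α] {s : Finset α} {a : α} {f : α → ℕ}

/-- The linear extensions of a finite poset `s`, as numberings of its elements by `0, …, #s - 1`
compatible with the order. Extending them by `0` outside `s` lets the numberings of different
finite sets be compared as functions on `α`. -/
def linearExtensions (s : Finset α) : Set (α → ℕ) :=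
  {f | Set.BijOn f s (Set.Iio #s) ∧ MonotoneOn f s ∧ ∀ a ∉ s, f a = 0}

lemma extend_mem_linearExtensions {T : s ≃ Fin #s} (hT : Monotone T) :
    Function.extend Subtype.val (fun a => (T a : ℕ)) 0 ∈ linearExtensions s := by
  have h_ext (a : s) : Function.extend Subtype.val (fun a => (T a : ℕ)) 0 (a : α) = T a :=
    Subtype.val_injective.extend_apply _ _ a
  refine ⟨⟨fun a ha => ?_, fun a ha b hb hab => ?_, fun k hk => ?_⟩, fun a ha b hb hab => ?_,
    fun a ha => Function.extend_apply' _ _ _ (by simpa using ha)⟩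
  · exact (h_ext ⟨a, ha⟩).trans_lt (T ⟨a, ha⟩).2
  · rw [h_ext ⟨a, ha⟩, h_ext ⟨b, hb⟩] at hab
    exact congrArg Subtype.val (T.injective (Fin.ext hab))
  · exact ⟨T.symm ⟨k, hk⟩, (T.symm ⟨k, hk⟩).2, by simp⟩
  · rw [h_ext ⟨a, ha⟩, h_ext ⟨b, hb⟩]
    exact hT hab

lemma linearExtensions_eq_range (s : Finset α) :
    linearExtensions s = Set.range fun T : {T : s ≃ Fin #s // Monotone T} =>
      Function.extend Subtype.val (fun a => (T.1 a : ℕ)) 0 := by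
  refine Set.Subset.antisymm ?_ (Set.range_subset_iff.mpr fun T => extend_mem_linearExtensions T.2)
  rintro f ⟨h_bij, h_mono, h_zero⟩
  let t : s → Fin #s := fun a => ⟨f a, h_bij.mapsTo a.2⟩
  have ht : Function.Bijective t := by
    refine ⟨fun a b hab => Subtype.ext <| h_bij.injOn a.2 b.2 (congrArg Fin.val hab), fun k => ?_⟩
    obtain ⟨a, ha, hak⟩ := h_bij.surjOn k.2
    exact ⟨⟨a, ha⟩, Fin.ext hak⟩
  refine ⟨⟨Equiv.ofBijective t ht, fun a b hab => h_mono a.2 b.2 hab⟩, funext fun a => ?_⟩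
  by_cases ha : a ∈ s
  · exact Subtype.val_injective.extend_apply _ _ (⟨a, ha⟩ : s)
  · exact (Function.extend_apply' _ _ _ (by simpa using ha)).trans (h_zero a ha).symm

lemma finite_linearExtensions (s : Finset α) : (linearExtensions s).Finite := by
  rw [linearExtensions_eq_range]
  exact Set.finite_range _

lemma ncard_linearExtensions (s : Finset α) :
    (linearExtensions s).ncard = Nat.card {T : s ≃ Fin #s // Monotone T} := by
  rw [linearExtensions_eq_range]
  refine Set.ncard_range_of_injective fun T T' h => Subtype.ext <| Equiv.ext fun a => Fin.ext ?_
  exact congrFun (Function.extend_injective Subtype.val_injective _ h) a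

lemma linearExtensions_empty : linearExtensions (∅ : Finset α) = {0} := by
  ext f
  simp [linearExtensions, MonotoneOn, funext_iff]

variable [DecidableEq α]

lemma mem_linearExtensions_insert_iff (ha : ∀ b ∈ s, ¬a ≤ b) (hfa : f a = #s) :
    f ∈ linearExtensions (insert a s) ↔ Function.update f a 0 ∈ linearExtensions s := by
  have has : a ∉ s := fun h => ha a h le_rfl
  have h_eqOn : Set.EqOn f (Function.update f a 0) s := fun b hb =>
    (Function.update_of_ne (ne_of_mem_of_not_mem hb has) _ _).symm
  have h_Iio : Set.Iio #(insert a s) = insert (f a) (Set.Iio #s) := by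
    rw [Finset.card_insert_of_notMem has, hfa]
    exact Order.Iio_succ_eq_insert _
  have h_zero : (∀ b ∉ insert a s, f b = 0) ↔ ∀ b ∉ s, Function.update f a 0 b = 0 := by
    refine forall_congr' fun b => ?_
    rcases eq_or_ne b a with rfl | hba <;> simp [*]
  simp only [linearExtensions, Set.mem_ofPred_eq, h_Iio, Finset.coe_insert, h_zero,
    Set.BijOn.insert_iff (show a ∉ (s : Set α) from has)
      (show f a ∉ Set.Iio #s by simp [hfa]),
    ← h_eqOn.bijOn_iff, ← h_eqOn.congr_monotoneOn, Set.monotoneOn_insert_iff]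
  refine and_congr_right fun h_bij => and_congr_left fun _ => ?_
  refine ⟨fun h => h.2.2, fun h => ⟨fun b hb _ => ?_, fun b hb hab => absurd hab (ha b hb), h⟩⟩
  exact (h_bij.mapsTo hb).le.trans hfa.ge

lemma ncard_linearExtensions_insert (ha : ∀ b ∈ s, ¬a ≤ b) :
    {f ∈ linearExtensions (insert a s) | f a = #s}.ncard = (linearExtensions s).ncard := by
  have has : a ∉ s := fun h => ha a h le_rfl
  have h_update {g : α → ℕ} (hg : g ∈ linearExtensions s) :
      Function.update (Function.update g a #s) a 0 = g := by
    rw [Function.update_idem, Function.update_eq_self_iff, hg.2.2 a has]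
  have h_inv : Set.InvOn (Function.update · a #s) (Function.update · a 0)
      {f ∈ linearExtensions (insert a s) | f a = #s} (linearExtensions s) :=
    ⟨fun f hf => by simp [← hf.2], fun g hg => h_update hg⟩
  refine (h_inv.bijOn (fun f hf => (mem_linearExtensions_insert_iff ha hf.2).mp hf.1)
    fun g hg => ?_).ncard_eq
  have h_self : Function.update g a #s a = #s := Function.update_self ..
  exact ⟨(mem_linearExtensions_insert_iff ha h_self).mpr (by rwa [h_update hg]), h_self⟩

lemma linearExtensions_eq_biUnion (hs : s.Nonempty) :
    linearExtensions s = ⋃ a ∈ {a | Maximal (· ∈ s) a},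
      {f ∈ linearExtensions s | f a = #(s.erase a)} := by
  ext f
  simp only [Set.mem_iUnion, Set.mem_ofPred_eq, exists_prop]
  refine ⟨fun hf => ?_, fun ⟨_, _, hf, _⟩ => hf⟩
  obtain ⟨a, ha, hfa⟩ := hf.1.surjOn (Nat.sub_lt hs.card_pos one_pos : #s - 1 < #s)
  refine ⟨a, maximal_iff.mpr ⟨ha, fun b hb hab => ?_⟩, hf, ?_⟩
  · have h_le := hf.2.1 ha hb hab
    have h_lt : f b < #s := hf.1.mapsTo hb
    exact hf.1.injOn ha hb (by omega)
  · rw [hfa, Finset.card_erase_of_mem ha]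

lemma ncard_linearExtensions_eq_finsum (hs : s.Nonempty) :
    (linearExtensions s).ncard =
      ∑ᶠ a ∈ {a | Maximal (· ∈ s) a}, (linearExtensions (s.erase a)).ncard := by
  have h_fin : {a | Maximal (· ∈ s) a}.Finite := s.finite_toSet.subset fun _ ha => ha.prop
  have h_disj : {a | Maximal (· ∈ s) a}.PairwiseDisjoint
      fun a => {f ∈ linearExtensions s | f a = #(s.erase a)} := by
    intro a ha b hb hab
    refine Set.disjoint_left.mpr fun f hfa hfb => hab (hfa.1.1.injOn ha.prop hb.prop ?_)
    rw [hfa.2, hfb.2, Finset.card_erase_of_mem ha.prop, Finset.card_erase_of_mem hb.prop]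
  rw [linearExtensions_eq_biUnion hs, h_fin.ncard_biUnion
    (fun _ _ => (finite_linearExtensions s).subset (Set.sep_subset _ _)) h_disj]
  refine finsum_mem_congr rfl fun a ha => ?_
  have h_max : ∀ b ∈ s.erase a, ¬a ≤ b := fun b hb hab =>
    Finset.ne_of_mem_erase hb (ha.eq_of_ge (Finset.mem_of_mem_erase hb) hab)
  rw [← ncard_linearExtensions_insert h_max, Finset.insert_erase ha.prop]

end LinearExtension

section StandardYoungTableau

variable {lam : YoungDiagram}

lemma SYTCount_eq_ncard_linearExtensions (lam : YoungDiagram) :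
    SYTCount lam = (linearExtensions lam.cells).ncard := by
  rw [ncard_linearExtensions]
  refine Nat.card_congr (Equiv.subtypeEquivRight fun T => ?_)
  exact forall₂_congr fun a b => and_imp.symm

lemma SYTCount_bot : SYTCount ⊥ = 1 := by
  rw [SYTCount_eq_ncard_linearExtensions, YoungDiagram.cells_bot, linearExtensions_empty,
    Set.ncard_singleton]

lemma setOf_addBox_eq_image (lam : YoungDiagram) :
    {mu | AddBox mu lam} = eraseIci lam '' {c | Maximal (· ∈ lam.cells) c} := by
  ext mu
  exact addBox_iff

lemma SYTCount_eq_finsum (h : lam ≠ ⊥) :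
    SYTCount lam = ∑ᶠ mu ∈ {mu | AddBox mu lam}, SYTCount mu := by
  have h_inj : Set.InjOn (eraseIci lam) {c | Maximal (· ∈ lam.cells) c} :=
    (eraseIci_injOn lam).mono fun c hc => hc.prop
  rw [setOf_addBox_eq_image, finsum_mem_image h_inj, SYTCount_eq_ncard_linearExtensions,
    ncard_linearExtensions_eq_finsum (cells_nonempty h)]
  refine finsum_mem_congr rfl fun c hc => ?_
  have h_erase : (eraseIci lam c).cells = lam.cells.erase c := by
    rw [Finset.erase_eq, ← filter_le_eq_singleton_iff.mpr hc, ← Finset.filter_not]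
    rfl
  rw [SYTCount_eq_ncard_linearExtensions, h_erase]

end StandardYoungTableau

/-! ### Reciprocal factorials and Laguerre polynomials -/

section Laguerre

/-- The sequence `1 / m!`, extended by `0` to negative `m`. This uses that Mathlib's Gamma function
takes the value `0` at its poles. -/
noncomputable def invFactorial (m : ℤ) : ℝ := (Real.Gamma (m + 1))⁻¹

lemma invFactorial_natCast (n : ℕ) : invFactorial n = (n.factorial : ℝ)⁻¹ := by
  rw [invFactorial, Int.cast_natCast, Real.Gamma_nat_eq_factorial]

lemma invFactorial_zero : invFactorial 0 = 1 := by
  simpa using invFactorial_natCast 0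

lemma invFactorial_of_neg {m : ℤ} (hm : m < 0) : invFactorial m = 0 := by
  obtain ⟨n, rfl⟩ := Int.eq_negSucc_of_lt_zero hm
  have h_pole : ((Int.negSucc n : ℤ) : ℝ) + 1 = -n := by
    rw [Int.cast_negSucc]
    push_cast
    ring
  rw [invFactorial, h_pole, Real.Gamma_neg_nat_eq_zero, inv_zero]

lemma intCast_mul_invFactorial (m : ℤ) : (m : ℝ) * invFactorial m = invFactorial (m - 1) := by
  rw [invFactorial, invFactorial, Int.cast_sub, Int.cast_one, sub_add_cancel]
  rcases eq_or_ne (m : ℝ) 0 with hm | hm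
  · rw [hm, Real.Gamma_zero, inv_zero, zero_mul]
  · rw [Real.Gamma_add_one hm, mul_inv, mul_inv_cancel_left₀ hm]

lemma natCast_descFactorial (n i : ℕ) :
    (n.descFactorial i : ℝ) = n.factorial * invFactorial ((n : ℤ) - i) := by
  rcases le_or_gt i n with hi | hi
  · rw [← Nat.cast_sub hi, invFactorial_natCast, ← Nat.factorial_mul_descFactorial hi]
    push_cast
    field_simp
  · rw [invFactorial_of_neg (by omega), Nat.descFactorial_of_lt hi, Nat.cast_zero, mul_zero]

lemma prod_sub_eq_prod_factorial_mul_det {r : ℕ} (n : Fin r → ℕ) :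
    ∏ p : Fin r × Fin r with p.1 < p.2, ((n p.2 : ℝ) - n p.1) =
      (∏ j, ((n j).factorial : ℝ)) *
        (Matrix.of fun i j : Fin r => invFactorial ((n j : ℤ) - (i : ℕ))).det := by
  have h_prod : ∏ p : Fin r × Fin r with p.1 < p.2, ((n p.2 : ℝ) - n p.1) =
      ∏ i, ∏ j ∈ Ioi i, ((n j : ℝ) - n i) := by
    rw [Finset.prod_sigma']
    exact Finset.prod_bij' (fun p _ => ⟨p.1, p.2⟩) (fun q _ => (q.1, q.2)) (by simp) (by simp)
      (by simp) (by simp) (by simp)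
  rw [h_prod, ← Matrix.det_vandermonde, Matrix.det_eval_matrixOfPolynomials_eq_det_vandermonde
    (fun j => (n j : ℝ)) (fun i => descPochhammer ℝ i) (fun i => descPochhammer_natDegree ℝ i)
    (fun i => monic_descPochhammer ℝ i), ← Matrix.det_transpose, ← Matrix.det_mul_row]
  congr 1
  ext i j
  simp only [Matrix.transpose_apply, Matrix.of_apply, descPochhammer_eval_eq_descFactorial,
    natCast_descFactorial]

variable (α : ℝ)

lemma lm_succ (n : ℕ) :
    lm α (n + 1) = (X + C (α - n)) * lm α n + X * C (n : ℝ) * lm α (n - 1) := by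
  cases n with
  | zero => simp [lm]
  | succ n =>
    rw [lm, Nat.add_sub_cancel]
    push_cast
    congr 4
    ring

lemma derivative_lm (n : ℕ) : derivative (lm α n) = C (n : ℝ) * lm α (n - 1) := by
  induction n using Nat.twoStepInduction with
  | zero => simp [lm]
  | one => simp [lm]
  | more n ih ih' =>
    rw [lm_succ α (n + 1)]
    simp only [derivative_add, derivative_mul, derivative_X, derivative_C, ih, ih',
      Nat.add_sub_cancel, show n + 2 - 1 = n + 1 from rfl]
    have h_lm := lm_succ α n
    push_cast
    simp only [map_add, map_sub, map_one, map_natCast, map_ofNat] at h_lm ⊢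
    linear_combination (-(n : ℝ[X]) - 1) * h_lm

/-- The sequence `l_m / m!`, extended by `0` to negative `m`. -/
noncomputable def scaledLaguerre (m : ℤ) : ℝ[X] := C (invFactorial m) * lm α m.toNat

lemma scaledLaguerre_of_neg {m : ℤ} (hm : m < 0) : scaledLaguerre α m = 0 := by
  rw [scaledLaguerre, invFactorial_of_neg hm, C_0, zero_mul]

lemma scaledLaguerre_zero : scaledLaguerre α 0 = 1 := by
  simp [scaledLaguerre, invFactorial_zero, lm]

lemma lm_eq_factorial_mul_scaledLaguerre (n : ℕ) :
    lm α n = C (n.factorial : ℝ) * scaledLaguerre α n := by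
  rw [scaledLaguerre, ← mul_assoc, ← C_mul, invFactorial_natCast,
    mul_inv_cancel₀ (by positivity), C_1, one_mul, Int.toNat_natCast]

lemma scaledLaguerre_recurrence (m : ℤ) :
    (m : ℝ[X]) * scaledLaguerre α m =
      (X + C α - 1 * ((m : ℝ[X]) - 1)) * scaledLaguerre α (m - 1)
        + X * scaledLaguerre α (m - 2) := by
  have h_inv (k : ℤ) : (k : ℝ[X]) * C (invFactorial k) = C (invFactorial (k - 1)) := by
    rw [← intCast_mul_invFactorial, C_mul, map_intCast]
  rcases le_or_gt m 0 with hm | hm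
  · rw [scaledLaguerre_of_neg α (by omega : m - 1 < 0),
      scaledLaguerre_of_neg α (by omega : m - 2 < 0), scaledLaguerre, ← mul_assoc, h_inv,
      invFactorial_of_neg (by omega : m - 1 < 0)]
    simp
  · obtain ⟨n, rfl⟩ : ∃ n : ℕ, m = n + 1 := ⟨(m - 1).toNat, by omega⟩
    have h_sub : (n : ℤ) + 1 - 2 = n - 1 := by ring
    have h_toNat : ((n : ℤ) - 1).toNat = n - 1 := by omega
    have h_toNat' : ((n : ℤ) + 1).toNat = n + 1 := by omega
    have h_succ := h_inv (n + 1)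
    have h_self := h_inv n
    simp only [scaledLaguerre, h_sub, h_toNat, h_toNat', add_sub_cancel_right, lm_succ,
      Int.toNat_natCast] at h_succ ⊢
    push_cast at h_succ h_self ⊢
    simp only [map_sub, map_natCast]
    linear_combination
      ((X + (C α - n)) * lm α n + X * n * lm α (n - 1)) * h_succ + X * lm α (n - 1) * h_self

lemma derivative_scaledLaguerre (m : ℤ) :
    derivative (scaledLaguerre α m) = scaledLaguerre α (m - 1) := by
  rw [scaledLaguerre, scaledLaguerre, derivative_C_mul, derivative_lm, ← intCast_mul_invFactorial]
  rcases lt_or_ge m 0 with hm | hm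
  · simp [invFactorial_of_neg hm]
  · lift m to ℕ using hm
    rw [← mul_assoc, ← C_mul, show ((m : ℤ) - 1).toNat = (m : ℤ).toNat - 1 by omega,
      Int.toNat_natCast, Int.cast_natCast, mul_comm (m : ℝ)]

lemma iterate_derivative_scaledLaguerre (m : ℤ) (i : ℕ) :
    derivative^[i] (scaledLaguerre α m) = scaledLaguerre α (m - i) := by
  induction i with
  | zero => simp
  | succ i ih =>
    rw [Function.iterate_succ_apply', ih, derivative_scaledLaguerre]
    push_cast
    rw [sub_sub]

lemma Wr_lm {r : ℕ} (n : Fin r → ℕ) :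
    Wr (fun j => lm α (n j)) = C (∏ j, ((n j).factorial : ℝ)) *
      (Matrix.of fun i j : Fin r => scaledLaguerre α ((n j : ℤ) - (i : ℕ))).det := by
  rw [Wr, map_prod, ← Matrix.det_mul_row]
  congr 1
  ext1 i j
  simp only [Matrix.of_apply, lm_eq_factorial_mul_scaledLaguerre, iterate_derivative_C_mul,
    iterate_derivative_scaledLaguerre]

end Laguerre

/-! ### The normalized Wronskian as a Jacobi–Trudi determinant -/

section Normalization

lemma SYTCount_eq_factorial_mul_jacobiTrudi (lam : YoungDiagram) :
    (SYTCount lam : ℝ) = lam.card.factorial * jacobiTrudi invFactorial lam := by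
  have h_rec (m : ℤ) : (m : ℝ) * invFactorial m =
      (1 - 0 * ((m : ℝ) - 1)) * invFactorial (m - 1) + 0 * invFactorial (m - 2) := by
    simp [intCast_mul_invFactorial]
  induction h_card : lam.card using Nat.strong_induction_on generalizing lam with
  | _ n ih =>
  rcases eq_or_ne lam ⊥ with rfl | h_ne
  · simp [← h_card, YoungDiagram.card, SYTCount_bot, jacobiTrudi_bot]
  · rw [← h_card, factorial_mul_jacobiTrudi_recurrence (fun _ => invFactorial_of_neg)
      invFactorial_zero h_rec h_ne, SYTCount_eq_finsum h_ne,
      Nat.cast_finsum_mem ((finite_Iic lam).subset fun _ hmu => hmu.1)]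
    simp only [zero_mul, sub_zero, one_mul, add_zero]
    exact finsum_mem_congr rfl fun mu hmu => ih _ (by have := hmu.2; omega) mu rfl

-- Row `i` holds `h (n_j - i)` here but `h (λ_j - j + i)` in the Jacobi–Trudi determinant; the sign
-- comes from reversing the order of the rows.
lemma jacobiTrudi_eq_sign_mul_det {R : Type*} [CommRing R] (h : ℤ → R) (lam : YoungDiagram) :
    jacobiTrudi h lam =
      ((Equiv.Perm.sign (Fin.revPerm : Equiv.Perm (Fin (nrows lam))) : ℤ) : R) *
        (Matrix.of fun i j : Fin (nrows lam) => h ((degVec lam j : ℤ) - (i : ℕ))).det := by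
  rw [← Matrix.det_permute, jacobiTrudi]
  congr 1
  ext i j
  simp only [shiftMatrix, shiftedRowLen, degVec, Matrix.of_apply, Matrix.submatrix_apply, id,
    Fin.revPerm_apply, Fin.val_rev]
  congr 1
  omega

lemma degVec_injective (lam : YoungDiagram) : Function.Injective (degVec lam) := by
  refine StrictAnti.injective fun i j hij => ?_
  have h_anti := lam.rowLen_anti i j hij.le
  simp only [degVec]
  omega

lemma prod_degVec_sub_ne_zero (lam : YoungDiagram) :
    ∏ p : Fin (nrows lam) × Fin (nrows lam) with p.1 < p.2,
      ((degVec lam p.2 : ℝ) - degVec lam p.1) ≠ 0 :=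
  Finset.prod_ne_zero_iff.mpr fun _ hp => sub_ne_zero.mpr fun h_eq =>
    (Finset.mem_filter.mp hp).2.ne' (degVec_injective lam (Nat.cast_injective h_eq))

lemma C_jacobiTrudi_invFactorial_mul_lW (α : ℝ) (lam : YoungDiagram) :
    C (jacobiTrudi invFactorial lam) * lW α lam = jacobiTrudi (scaledLaguerre α) lam := by
  have h_ne := prod_degVec_sub_ne_zero lam
  rw [prod_sub_eq_prod_factorial_mul_det] at h_ne
  obtain ⟨h_prod, h_det⟩ := mul_ne_zero_iff.mp h_ne
  rw [lW, Wr_lm, prod_sub_eq_prod_factorial_mul_det, jacobiTrudi_eq_sign_mul_det invFactorial,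
    jacobiTrudi_eq_sign_mul_det (scaledLaguerre α), ← mul_assoc, ← mul_assoc, ← C_mul, ← C_mul,
    ← map_intCast (C : ℝ →+* ℝ[X])]
  congr 2
  field_simp

lemma C_SYTCount_mul_lW (α : ℝ) (lam : YoungDiagram) :
    C (SYTCount lam : ℝ) * lW α lam =
      (lam.card.factorial : ℝ[X]) * jacobiTrudi (scaledLaguerre α) lam := by
  rw [SYTCount_eq_factorial_mul_jacobiTrudi, C_mul, mul_assoc, C_jacobiTrudi_invFactorial_mul_lW,
    map_natCast]

end Normalization

end WronskianLaguerre

theorem stmt13 (α : ℝ) (lam : YoungDiagram) (h : lam ≠ ⊥) :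
    C (SYTCount lam : ℝ) * lW α lam
      = (∑ᶠ μ ∈ {μ : YoungDiagram | AddBox μ lam},
            (X + C (α - (skewContent lam μ : ℝ))) * (C (SYTCount μ : ℝ) * lW α μ))
        + X * C ((lam.card : ℝ) - 1) *
            ((∑ᶠ ρ ∈ {ρ : YoungDiagram | AddDominoH ρ lam}, C (SYTCount ρ : ℝ) * lW α ρ)
              - ∑ᶠ ρ ∈ {ρ : YoungDiagram | AddDominoV ρ lam}, C (SYTCount ρ : ℝ) * lW α ρ) := by
  have h_content (s : ℤ) : X + C (α - (s : ℝ)) = X + C α - 1 * (s : ℝ[X]) := by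
    rw [C_sub, map_intCast, one_mul, add_sub_assoc]
  have h_card : C ((lam.card : ℝ) - 1) = (lam.card : ℝ[X]) - 1 := by
    rw [C_sub, map_natCast, C_1]
  simp only [WronskianLaguerre.C_SYTCount_mul_lW, h_content, h_card]
  exact WronskianLaguerre.factorial_mul_jacobiTrudi_recurrence
    (fun _ => WronskianLaguerre.scaledLaguerre_of_neg α)
    (WronskianLaguerre.scaledLaguerre_zero α) (WronskianLaguerre.scaledLaguerre_recurrence α) h
end
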